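/- arXiv:0812.2273 — 2 statements merged into one kernel-verified Lean document; each statement's English description precedes it below -/
import Mathlib

section
/- Let 1 ≤ θ < 2 and m = 1/2. There exists ε₀ > 0 such that for every ε ∈ (0, ε₀), setting ω = m − ε, there exist twice continuously differentiable functions f, g : (0,∞) → ℝ, not both identically zero, satisfying for all r > 0 the system f'(r) + (2/r) f(r) = (|g(r)² − f(r)²|^θ − (m − ω)) g(r) and g'(r) = (|g(r)² − f(r)²|^θ − (m + ω)) f(r), and constants C > 0, σ > 0 (depending on ε) such that |f(r)| + |g(r)| + |f'(r)| + |g'(r)| ≤ C e^{−σ r} for all r ≥ 1. -/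
namespace DiracLoc
open Set Filter Topology

lemma weight_bound {L C τ : ℝ} (hL : 0 < L) (hτ : 0 ≤ τ) {h : ℝ → ℝ}
    (hc : Continuous h) (hb : ∀ σ ∈ Icc (0:ℝ) 1, |h σ| ≤ C * Real.exp (L * (τ * σ))) :
    Real.exp (-(L * τ)) * |τ * ∫ σ in (0:ℝ)..1, h σ| ≤ C / L := by
  have hC : 0 ≤ C := by
    have := hb 0 (by simp)
    simp at this
    exact (abs_nonneg _).trans this
  have h1 : |∫ σ in (0:ℝ)..1, h σ| ≤ ∫ σ in (0:ℝ)..1, C * Real.exp (L * (τ * σ)) := by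
    refine (intervalIntegral.abs_integral_le_integral_abs (by norm_num)).trans ?_
    apply intervalIntegral.integral_mono_on (by norm_num)
    · exact (hc.abs).intervalIntegrable _ _
    · exact Continuous.intervalIntegrable (by fun_prop) _ _
    · exact hb
  have h2 : ∫ σ in (0:ℝ)..1, τ * (C * Real.exp (L * (τ * σ))) =
      C / L * Real.exp (L * (τ * 1)) - C / L * Real.exp (L * (τ * 0)) := by
    apply intervalIntegral.integral_eq_sub_of_hasDerivAt (f := fun σ => C / L * Real.exp (L * (τ * σ)))
    · intro x _
      have : HasDerivAt (fun x : ℝ => L * (τ * x)) (L * τ) x := by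
        simpa using ((hasDerivAt_id x).const_mul τ).const_mul L
      refine ((this.exp).const_mul (C / L)).congr_deriv ?_
      field_simp
    · exact Continuous.intervalIntegrable (by fun_prop) _ _
  rw [intervalIntegral.integral_const_mul] at h2
  have h3 : |τ * ∫ σ in (0:ℝ)..1, h σ| ≤ C / L * Real.exp (L * τ) := by
    rw [abs_mul, abs_of_nonneg hτ]
    calc _ ≤ τ * ∫ σ in (0:ℝ)..1, C * Real.exp (L * (τ * σ)) := by gcongr
      _ ≤ _ := by
        rw [h2]; simp
        positivity
  calc _ ≤ Real.exp (-(L * τ)) * (C / L * Real.exp (L * τ)) := by gcongr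
    _ = C / L * (Real.exp (-(L * τ)) * Real.exp (L * τ)) := by ring
    _ = C / L := by rw [← Real.exp_add]; simp

/-- bounded and Lipschitz field -/
def Good (K : NNReal) (B : ℝ) (N : ℝ × ℝ → ℝ × ℝ) : Prop :=
  LipschitzWith K N ∧ ∀ p, ‖N p‖ ≤ B

noncomputable def opRaw (L : ℝ) (N : ℝ × ℝ → ℝ × ℝ) (a : ℝ) (F : ℝ → ℝ × ℝ) (t : ℝ) : ℝ × ℝ :=
  (Real.exp (-(L * max t 0)) * (max t 0 * ∫ σ in (0:ℝ)..1,
      σ ^ 2 * (N (Real.exp (L * (max t 0 * σ)) • F (max t 0 * σ))).1),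
   Real.exp (-(L * max t 0)) * (a + max t 0 * ∫ σ in (0:ℝ)..1,
      (N (Real.exp (L * (max t 0 * σ)) • F (max t 0 * σ))).2))

lemma opRaw_cont (L : ℝ) {N : ℝ × ℝ → ℝ × ℝ} (hN : Continuous N) (a : ℝ) {F : ℝ → ℝ × ℝ}
    (hF : Continuous F) : Continuous (opRaw L N a F) := by
  unfold opRaw
  have h1 : Continuous fun t : ℝ => ∫ σ in (0:ℝ)..1,
      σ ^ 2 * (N (Real.exp (L * (max t 0 * σ)) • F (max t 0 * σ))).1 := by
    apply intervalIntegral.continuous_parametric_intervalIntegral_of_continuous'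
    simp only [Function.uncurry_def]
    fun_prop
  have h2 : Continuous fun t : ℝ => ∫ σ in (0:ℝ)..1,
      (N (Real.exp (L * (max t 0 * σ)) • F (max t 0 * σ))).2 := by
    apply intervalIntegral.continuous_parametric_intervalIntegral_of_continuous'
    simp only [Function.uncurry_def]
    fun_prop
  fun_prop

lemma opRaw_diff {L : ℝ} (hL : 0 < L) {N N' : ℝ × ℝ → ℝ × ℝ} (hN : Continuous N)
    (hN' : Continuous N') (a a' : ℝ) {F F' : ℝ → ℝ × ℝ}
    (hF : Continuous F) (hF' : Continuous F') {C : ℝ}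
    (h : ∀ s, 0 ≤ s → ‖N (Real.exp (L * s) • F s) - N' (Real.exp (L * s) • F' s)‖
      ≤ C * Real.exp (L * s)) (t : ℝ) :
    ‖opRaw L N a F t - opRaw L N' a' F' t‖ ≤ |a - a'| + C / L := by
  set τ := max t 0 with hτ
  have hτ0 : 0 ≤ τ := le_max_right _ _
  have key : ∀ σ ∈ Icc (0:ℝ) 1, ‖N (Real.exp (L * (τ * σ)) • F (τ * σ)) -
      N' (Real.exp (L * (τ * σ)) • F' (τ * σ))‖ ≤ C * Real.exp (L * (τ * σ)) :=
    fun σ hσ => h _ (mul_nonneg hτ0 hσ.1)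
  have e1 : Real.exp (-(L * τ)) ≤ 1 := by
    rw [Real.exp_le_one_iff]; nlinarith
  rw [Prod.norm_def]
  apply max_le
  · simp only [opRaw, ← hτ, Prod.fst_sub]
    rw [← mul_sub, ← mul_sub, ← intervalIntegral.integral_sub]
    · rw [Real.norm_eq_abs, abs_mul, abs_of_pos (Real.exp_pos _)]
      refine (weight_bound hL hτ0 (C := C) ?_ ?_).trans (by linarith [abs_nonneg (a - a')])
      · fun_prop
      · intro σ hσ
        rw [← mul_sub, abs_mul]
        have := (norm_fst_le _).trans (key σ hσ)
        rw [Prod.fst_sub, Real.norm_eq_abs] at this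
        have h2 : |σ ^ 2| ≤ 1 := by
          rw [abs_of_nonneg (sq_nonneg _)]; nlinarith [hσ.1, hσ.2]
        nlinarith [abs_nonneg ((N (Real.exp (L * (τ * σ)) • F (τ * σ))).1 -
          (N' (Real.exp (L * (τ * σ)) • F' (τ * σ))).1)]
    · exact Continuous.intervalIntegrable (by fun_prop) _ _
    · exact Continuous.intervalIntegrable (by fun_prop) _ _
  · simp only [opRaw, ← hτ, Prod.snd_sub]
    rw [← mul_sub, add_sub_add_comm, ← mul_sub, ← intervalIntegral.integral_sub, mul_add]
    · refine (abs_add_le _ _).trans ?_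
      rw [abs_mul, abs_mul, abs_of_pos (Real.exp_pos _)]
      apply add_le_add
      · nlinarith [abs_nonneg (a - a')]
      refine (weight_bound hL hτ0 (C := C) ?_ ?_)
      · fun_prop
      · intro σ hσ
        have := (norm_snd_le _).trans (key σ hσ)
        rwa [Prod.snd_sub, Real.norm_eq_abs] at this
    · exact Continuous.intervalIntegrable (by fun_prop) _ _
    · exact Continuous.intervalIntegrable (by fun_prop) _ _

lemma Good.cont {K : NNReal} {B : ℝ} {N : ℝ × ℝ → ℝ × ℝ} (h : Good K B N) : Continuous N :=
  h.1.continuous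

lemma opRaw_bdd {L : ℝ} (hL : 0 < L) {K : NNReal} {B : ℝ} {N : ℝ × ℝ → ℝ × ℝ} (h : Good K B N)
    (a : ℝ) {F : ℝ → ℝ × ℝ} (hF : Continuous F) (t : ℝ) :
    ‖opRaw L N a F t‖ ≤ |a| + B / L := by
  have := opRaw_diff hL h.cont (N' := fun _ => 0) continuous_const a 0 hF hF (C := B) ?_ t
  · simpa [opRaw] using this
  · intro s hs
    have h1 := h.2 (Real.exp (L * s) • F s)
    have : 1 ≤ Real.exp (L * s) := Real.one_le_exp (by positivity)
    have h0 := norm_nonneg (N (Real.exp (L * s) • F s))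
    simp only [sub_zero]
    nlinarith

noncomputable def op {L : ℝ} (hL : 0 < L) {K : NNReal} {B : ℝ} {N : ℝ × ℝ → ℝ × ℝ}
    (h : Good K B N) (a : ℝ) (F : BoundedContinuousFunction ℝ (ℝ × ℝ)) :
    BoundedContinuousFunction ℝ (ℝ × ℝ) :=
  BoundedContinuousFunction.ofNormedAddCommGroup (opRaw L N a F)
    (opRaw_cont L h.cont a F.continuous) (|a| + B / L) (opRaw_bdd hL h a F.continuous)

lemma op_contr {K : NNReal} {B : ℝ} (hL : 0 < 2 * ((K:ℝ) + 1)) {N : ℝ × ℝ → ℝ × ℝ}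
    (h : Good K B N) (a : ℝ) : ContractingWith (1/2) (op hL h a) := by
  refine ⟨by rw [← NNReal.coe_lt_coe]; norm_num, LipschitzWith.of_dist_le_mul fun F G => ?_⟩
  rw [BoundedContinuousFunction.dist_le (by positivity)]
  intro t
  rw [dist_eq_norm]
  have := opRaw_diff hL h.cont h.cont a a F.continuous G.continuous (C := K * dist F G) ?_ t
  · refine this.trans ?_
    simp only [sub_self, abs_zero, zero_add]
    rw [div_le_iff₀ hL]
    push_cast
    nlinarith [dist_nonneg (x := F) (y := G), K.coe_nonneg]
  · intro s hs
    rw [← dist_eq_norm]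
    refine (h.1.dist_le_mul _ _).trans ?_
    rw [dist_smul₀, Real.norm_eq_abs, abs_of_pos (Real.exp_pos _)]
    have := F.dist_coe_le_dist (g := G) s
    calc _ ≤ (K:ℝ) * (Real.exp (2 * ((K:ℝ) + 1) * s) * dist F G) := by gcongr
      _ = _ := by ring

lemma fixed_eq {L : ℝ} (hL : 0 < L) {K : NNReal} {B : ℝ} {N : ℝ × ℝ → ℝ × ℝ}
    (h : Good K B N) (a : ℝ) (F : BoundedContinuousFunction ℝ (ℝ × ℝ)) (hF : op hL h a F = F)
    (S : ℝ → ℝ × ℝ) (hS : S = fun t => Real.exp (L * max t 0) • F (max t 0)) :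
    Continuous S ∧ S 0 = (0, a) ∧ (∀ t > 0,
      HasDerivAt (fun t => (S t).1) ((N (S t)).1 - 2 / t * (S t).1) t ∧
      HasDerivAt (fun t => (S t).2) ((N (S t)).2) t) := by
  have hSc : Continuous S := by rw [hS]; fun_prop
  have hN := h.cont
  have hfix : ∀ t, F t = opRaw L N a F t := fun t => by
    conv_lhs => rw [← hF]
    rfl
  have hSeq : ∀ t, 0 ≤ t → S t = (t * ∫ σ in (0:ℝ)..1, σ ^ 2 * (N (S (t * σ))).1,
      a + t * ∫ σ in (0:ℝ)..1, (N (S (t * σ))).2) := by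
    intro t ht
    have hcongr : ∀ σ ∈ uIcc (0:ℝ) 1, Real.exp (L * (t * σ)) • F (t * σ) = S (t * σ) := by
      intro σ hσ
      rw [uIcc_of_le (by norm_num)] at hσ
      rw [hS]; simp [max_eq_left (mul_nonneg ht hσ.1)]
    have h1 : S t = Real.exp (L * t) • opRaw L N a F t := by
      rw [← hfix, hS]; simp [max_eq_left ht]
    rw [h1]
    simp only [opRaw, max_eq_left ht]
    have i1 : ∫ σ in (0:ℝ)..1, σ ^ 2 * (N (Real.exp (L * (t * σ)) • F (t * σ))).1 =
        ∫ σ in (0:ℝ)..1, σ ^ 2 * (N (S (t * σ))).1 :=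
      intervalIntegral.integral_congr fun σ hσ => by simp only [hcongr σ hσ]
    have i2 : ∫ σ in (0:ℝ)..1, (N (Real.exp (L * (t * σ)) • F (t * σ))).2 =
        ∫ σ in (0:ℝ)..1, (N (S (t * σ))).2 :=
      intervalIntegral.integral_congr fun σ hσ => by simp only [hcongr σ hσ]
    rw [i1, i2]
    have e : Real.exp (L * t) * Real.exp (-(L * t)) = 1 := by rw [← Real.exp_add]; simp
    ext <;> simp [← mul_assoc, e]
  have hv : ∀ t, 0 ≤ t → t ^ 2 * (S t).1 = ∫ s in (0:ℝ)..t, s ^ 2 * (N (S s)).1 := by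
    intro t ht
    rw [hSeq t ht]
    have := intervalIntegral.mul_integral_comp_mul_left (a := 0) (b := 1)
      (f := fun s => s ^ 2 * (N (S s)).1) t
    simp only [mul_zero, mul_one] at this
    rw [← this]
    simp only [mul_pow, mul_assoc]
    rw [intervalIntegral.integral_const_mul]
    ring
  have hw : ∀ t, 0 ≤ t → (S t).2 = a + ∫ s in (0:ℝ)..t, (N (S s)).2 := by
    intro t ht
    rw [hSeq t ht]
    have := intervalIntegral.mul_integral_comp_mul_left (a := 0) (b := 1)
      (f := fun s => (N (S s)).2) t
    simp only [mul_zero, mul_one] at this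
    rw [← this]
  refine ⟨hSc, ?_, ?_⟩
  · rw [hSeq 0 le_rfl]; simp
  · intro t ht
    constructor
    · have hd : HasDerivAt (fun t => ∫ s in (0:ℝ)..t, s ^ 2 * (N (S s)).1)
          (t ^ 2 * (N (S t)).1) t :=
        ((by fun_prop : Continuous fun s => s ^ 2 * (N (S s)).1).integral_hasStrictDerivAt
          0 t).hasDerivAt
      have h2 := (hd.div ((hasDerivAt_id t).pow 2) (by simp; positivity))
      refine (h2.congr_of_eventuallyEq ?_).congr_deriv ?_
      · filter_upwards [lt_mem_nhds ht] with s hs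
        simp only [Pi.div_apply, Pi.pow_apply, id]
        rw [← hv s hs.le]; field_simp
      · simp only [Pi.pow_apply, id]
        rw [← hv t ht.le]; field_simp; simp; try ring
    · have hd : HasDerivAt (fun t => ∫ s in (0:ℝ)..t, (N (S s)).2) ((N (S t)).2) t :=
        ((by fun_prop : Continuous fun s => (N (S s)).2).integral_hasStrictDerivAt
          0 t).hasDerivAt
      refine (hd.const_add a).congr_of_eventuallyEq ?_
      filter_upwards [lt_mem_nhds ht] with s hs
      exact hw s hs.le

theorem ivp (K : NNReal) (B : ℝ) :
    ∃ L > (0:ℝ), ∃ sol : (ℝ × ℝ → ℝ × ℝ) → ℝ → ℝ → ℝ × ℝ,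
      (∀ N a, Good K B N → Continuous (sol N a) ∧ sol N a 0 = (0, a) ∧ ∀ t > 0,
        HasDerivAt (fun t => (sol N a t).1) ((N (sol N a t)).1 - 2 / t * (sol N a t).1) t ∧
        HasDerivAt (fun t => (sol N a t).2) ((N (sol N a t)).2) t) ∧
      (∀ N N' a a' η, Good K B N → Good K B N' → 0 ≤ η → (∀ p, ‖N p - N' p‖ ≤ η) → ∀ t, 0 ≤ t →
        ‖sol N a t - sol N' a' t‖ ≤ 2 * (|a - a'| + η) * Real.exp (L * t)) := by
  classical
  have hL : 0 < 2 * ((K:ℝ) + 1) := by positivity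
  let fx : ∀ N, Good K B N → ℝ → BoundedContinuousFunction ℝ (ℝ × ℝ) := fun N h a =>
    ContractingWith.fixedPoint (op hL h a) (op_contr hL h a)
  refine ⟨2 * ((K:ℝ) + 1), hL, fun N a t => if h : Good K B N then
    Real.exp (2 * ((K:ℝ) + 1) * max t 0) • fx N h a (max t 0) else 0, ?_, ?_⟩
  · intro N a h
    simp only [h, dif_pos]
    exact fixed_eq hL h a (fx N h a) (ContractingWith.fixedPoint_isFixedPt (op_contr hL h a)) _ rfl
  · intro N N' a a' η h h' hη hd t ht
    simp only [h, h', dif_pos, max_eq_left ht]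
    rw [← smul_sub, norm_smul, Real.norm_eq_abs, abs_of_pos (Real.exp_pos _), mul_comm]
    gcongr
    rw [← dist_eq_norm]
    refine (BoundedContinuousFunction.dist_coe_le_dist t).trans ?_
    have := ContractingWith.fixedPoint_lipschitz_in_map (op_contr hL h a) (op_contr hL h' a')
      (C := |a - a'| + η) ?_
    · refine this.trans (le_of_eq ?_)
      norm_num; ring
    · intro z
      rw [BoundedContinuousFunction.dist_le (by positivity)]
      intro t
      rw [dist_eq_norm]
      refine (opRaw_diff hL h.cont h'.cont a a' z.continuous z.continuous (C := η) ?_ t).trans ?_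
      · intro s hs
        refine (hd _).trans ?_
        have : 1 ≤ Real.exp (2 * ((K:ℝ) + 1) * s) := Real.one_le_exp (by positivity)
        nlinarith
      · gcongr
        apply div_le_self hη
        have := K.coe_nonneg
        linarith

noncomputable def clip (M x : ℝ) : ℝ := max 0 (min x M)

lemma clip_nonneg (M x : ℝ) : 0 ≤ clip M x := le_max_left _ _
lemma clip_le {M : ℝ} (hM : 0 ≤ M) (x : ℝ) : clip M x ≤ M := max_le hM (min_le_right _ _)
lemma clip_eq {M x : ℝ} (h0 : 0 ≤ x) (h1 : x ≤ M) : clip M x = x := by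
  rw [clip, min_eq_left h1, max_eq_right h0]
lemma clip_le_self {M x : ℝ} (h : 0 ≤ x) : clip M x ≤ x := max_le h (min_le_left _ _)
lemma clip_neg {M x : ℝ} (hM : 0 ≤ M) (h : x ≤ 0) : clip M x = 0 := by
  rw [clip, max_eq_left]; exact (min_le_left _ _).trans h
lemma clip_lip (M x y : ℝ) : |clip M x - clip M y| ≤ |x - y| := by
  unfold clip
  refine (abs_max_sub_max_le_max _ _ _ _).trans ?_
  refine max_le (by simp) ?_
  refine (abs_min_sub_min_le_max _ _ _ _).trans ?_
  exact max_le le_rfl (by simp)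

noncomputable def phi (θ s : ℝ) : ℝ := (clip 1 s) ^ θ

lemma phi_nonneg (θ s : ℝ) : 0 ≤ phi θ s := Real.rpow_nonneg (clip_nonneg _ _) _
lemma phi_le_one {θ : ℝ} (h : 1 ≤ θ) (s : ℝ) : phi θ s ≤ 1 :=
  Real.rpow_le_one (clip_nonneg _ _) (clip_le zero_le_one _) (by linarith)

lemma rpow_lip {θ : ℝ} (h1 : 1 ≤ θ) (h2 : θ < 2) {x y : ℝ} (hx : x ∈ Icc (0:ℝ) 1)
    (hy : y ∈ Icc (0:ℝ) 1) : |x ^ θ - y ^ θ| ≤ 2 * |x - y| := by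
  have := Convex.norm_image_sub_le_of_norm_hasDerivWithin_le (f := fun x : ℝ => x ^ θ)
    (f' := fun x => θ * x ^ (θ - 1)) (s := Icc (0:ℝ) 1) (C := 2) (x := y) (y := x) ?_ ?_
    (convex_Icc _ _) hy hx
  · simpa using this
  · intro z hz
    exact (Real.hasDerivAt_rpow_const (Or.inr h1)).hasDerivWithinAt
  · intro z hz
    have h3 : z ^ (θ - 1) ≤ 1 := Real.rpow_le_one hz.1 hz.2 (by linarith)
    have h4 : 0 ≤ z ^ (θ - 1) := Real.rpow_nonneg hz.1 _
    rw [Real.norm_eq_abs, abs_of_nonneg (by positivity)]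
    nlinarith

lemma phi_lip {θ : ℝ} (h1 : 1 ≤ θ) (h2 : θ < 2) (x y : ℝ) :
    |phi θ x - phi θ y| ≤ 2 * |x - y| := by
  refine (rpow_lip h1 h2 ⟨clip_nonneg _ _, clip_le zero_le_one _⟩
    ⟨clip_nonneg _ _, clip_le zero_le_one _⟩).trans ?_
  linarith [clip_lip 1 x y]

noncomputable def sS (μ : ℝ) (p : ℝ × ℝ) : ℝ := clip 1 p.2 ^ 2 - μ * clip 10 p.1 ^ 2

noncomputable def Nf (θ μ δ : ℝ) (p : ℝ × ℝ) : ℝ × ℝ :=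
  ((phi θ (sS μ p) - δ) * clip 1 p.2,
   -((1 - μ * δ - μ * phi θ (sS μ p)) * clip 10 p.1))

lemma Nf_good {θ μ δ : ℝ} (h1 : 1 ≤ θ) (h2 : θ < 2) (hμ : 0 ≤ μ) (hμ' : μ ≤ 1/200) (hδ : 0 ≤ δ)
    (hδ' : δ ≤ 1) : Good 8 10 (Nf θ μ δ) := by
  constructor
  · apply LipschitzWith.of_dist_le_mul
    intro p q
    set D := dist p q with hD
    have hp1 : |p.1 - q.1| ≤ D := by
      rw [hD, dist_eq_norm]; exact norm_fst_le (p - q)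
    have hp2 : |p.2 - q.2| ≤ D := by
      rw [hD, dist_eq_norm]; exact norm_snd_le (p - q)
    have hv := (clip_lip 10 p.1 q.1).trans hp1
    have hw := (clip_lip 1 p.2 q.2).trans hp2
    have v0 := clip_nonneg 10 p.1
    have v1 := clip_le (M := 10) (by norm_num) p.1
    have v0' := clip_nonneg 10 q.1
    have v1' := clip_le (M := 10) (by norm_num) q.1
    have w0 := clip_nonneg 1 p.2
    have w1 := clip_le (M := 1) (by norm_num) p.2
    have w0' := clip_nonneg 1 q.2
    have w1' := clip_le (M := 1) (by norm_num) q.2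
    have hD0 : 0 ≤ D := dist_nonneg
    have hs : |sS μ p - sS μ q| ≤ 3 * D := by
      have e : sS μ p - sS μ q = (clip 1 p.2 + clip 1 q.2) * (clip 1 p.2 - clip 1 q.2) -
        (μ * (clip 10 p.1 + clip 10 q.1)) * (clip 10 p.1 - clip 10 q.1) := by
        unfold sS; ring
      rw [e]
      refine (abs_sub _ _).trans ?_
      rw [abs_mul, abs_mul, abs_of_nonneg (by positivity : 0 ≤ clip 1 p.2 + clip 1 q.2),
        abs_of_nonneg (by positivity : 0 ≤ μ * (clip 10 p.1 + clip 10 q.1))]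
      have a1 : μ * (clip 10 p.1 + clip 10 q.1) ≤ 1 := by nlinarith
      have a2 := mul_le_mul (by linarith : clip 1 p.2 + clip 1 q.2 ≤ 2) hw (abs_nonneg _) (by norm_num)
      have a3 := mul_le_mul a1 hv (abs_nonneg _) (by norm_num)
      linarith
    have hph := (phi_lip h1 h2 (sS μ p) (sS μ q))
    have f0 := phi_nonneg θ (sS μ p)
    have f1 := phi_le_one h1 (sS μ p)
    have f0' := phi_nonneg θ (sS μ q)
    have f1' := phi_le_one h1 (sS μ q)
    have hph6 : |phi θ (sS μ p) - phi θ (sS μ q)| ≤ 6 * D := by linarith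
    rw [dist_eq_norm, Prod.norm_def]
    have h8 : ((8:NNReal):ℝ) = 8 := by norm_num
    rw [h8]
    apply max_le
    · have e : (Nf θ μ δ p - Nf θ μ δ q).1 = (phi θ (sS μ p) - phi θ (sS μ q)) * clip 1 p.2 +
        (phi θ (sS μ q) - δ) * (clip 1 p.2 - clip 1 q.2) := by simp [Nf]; ring
      rw [e]
      refine (abs_add_le _ _).trans ?_
      rw [abs_mul, abs_mul, abs_of_nonneg w0]
      have b1 : |phi θ (sS μ q) - δ| ≤ 1 := by rw [abs_le]; constructor <;> linarith
      have a2 := mul_le_mul hph6 w1 w0 (by positivity)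
      have a3 := mul_le_mul b1 hw (abs_nonneg _) (by norm_num)
      linarith
    · have e : (Nf θ μ δ p - Nf θ μ δ q).2 =
        (μ * clip 10 p.1) * (phi θ (sS μ p) - phi θ (sS μ q)) -
        (1 - μ * δ - μ * phi θ (sS μ q)) * (clip 10 p.1 - clip 10 q.1) := by simp [Nf]; ring
      rw [e]
      refine (abs_sub _ _).trans ?_
      rw [abs_mul (μ * clip 10 p.1), abs_mul (1 - μ * δ - μ * phi θ (sS μ q)),
        abs_of_nonneg (by positivity : 0 ≤ μ * clip 10 p.1)]
      have b1 : |1 - μ * δ - μ * phi θ (sS μ q)| ≤ 1 := by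
        rw [abs_le]; constructor <;> nlinarith
      have b2 : μ * clip 10 p.1 ≤ 1 := by nlinarith
      have a2 := mul_le_mul b2 hph6 (abs_nonneg _) (by norm_num)
      have a3 := mul_le_mul b1 hv (abs_nonneg _) (by norm_num)
      linarith
  · intro p
    have v0 := clip_nonneg 10 p.1
    have v1 := clip_le (M := 10) (by norm_num) p.1
    have w0 := clip_nonneg 1 p.2
    have w1 := clip_le (M := 1) (by norm_num) p.2
    have f0 := phi_nonneg θ (sS μ p)
    have f1 := phi_le_one h1 (sS μ p)
    rw [Prod.norm_def]
    apply max_le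
    · simp only [Nf, Real.norm_eq_abs]
      rw [abs_mul, abs_of_nonneg w0]
      have b1 : |phi θ (sS μ p) - δ| ≤ 1 := by rw [abs_le]; constructor <;> linarith
      have a3 := mul_le_mul b1 w1 w0 (by norm_num)
      linarith
    · simp only [Nf, Real.norm_eq_abs]
      rw [abs_neg, abs_mul, abs_of_nonneg v0]
      have b1 : |1 - μ * δ - μ * phi θ (sS μ p)| ≤ 1 := by
        rw [abs_le]; constructor <;> nlinarith
      have a3 := mul_le_mul b1 v1 v0 (by norm_num)
      linarith

lemma Nf_diff {θ μ δ : ℝ} (h1 : 1 ≤ θ) (h2 : θ < 2) (hμ : 0 ≤ μ) (hμ' : μ ≤ 1/200) (hδ : 0 ≤ δ)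
    (hδ' : δ ≤ 1) (p : ℝ × ℝ) : ‖Nf θ μ δ p - Nf θ 0 0 p‖ ≤ 200 * μ + δ := by
  have v0 := clip_nonneg 10 p.1
  have v1 := clip_le (M := 10) (by norm_num) p.1
  have w0 := clip_nonneg 1 p.2
  have w1 := clip_le (M := 1) (by norm_num) p.2
  have f0 := phi_nonneg θ (sS μ p)
  have f1 := phi_le_one h1 (sS μ p)
  have hph := (phi_lip h1 h2 (sS μ p) (sS 0 p))
  have hs : |sS μ p - sS 0 p| ≤ 100 * μ := by
    have e : sS μ p - sS 0 p = -(μ * clip 10 p.1 ^ 2) := by unfold sS; ring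
    rw [e, abs_neg, abs_of_nonneg (by positivity)]
    have : clip 10 p.1 ^ 2 ≤ 100 := by nlinarith
    nlinarith
  rw [Prod.norm_def]
  apply max_le
  · have e : (Nf θ μ δ p - Nf θ 0 0 p).1 =
      ((phi θ (sS μ p) - phi θ (sS 0 p)) - δ) * clip 1 p.2 := by simp [Nf]; ring
    rw [e, Real.norm_eq_abs, abs_mul, abs_of_nonneg w0]
    have := abs_sub (phi θ (sS μ p) - phi θ (sS 0 p)) δ
    rw [abs_of_nonneg hδ] at this
    have a3 := mul_le_mul (by linarith : |phi θ (sS μ p) - phi θ (sS 0 p) - δ| ≤ 200 * μ + δ) w1 w0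
      (by linarith)
    linarith
  · have e : (Nf θ μ δ p - Nf θ 0 0 p).2 =
      μ * ((δ + phi θ (sS μ p)) * clip 10 p.1) := by simp [Nf]; ring
    rw [e, Real.norm_eq_abs, abs_of_nonneg (by positivity)]
    have a3 := mul_le_mul (by linarith : δ + phi θ (sS μ p) ≤ 2) v1 v0 (by linarith)
    nlinarith

lemma Nf_eq {θ μ δ v w : ℝ} (hv : 0 ≤ v) (hv' : v ≤ 10 * w) (hw : w ≤ 1) (hμ : 0 ≤ μ)
    (hμ' : μ ≤ 1/200) :
    Nf θ μ δ (v, w) = (((w ^ 2 - μ * v ^ 2) ^ θ - δ) * w,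
      -((1 - μ * δ - μ * (w ^ 2 - μ * v ^ 2) ^ θ) * v)) ∧ w ^ 2 / 2 ≤ w ^ 2 - μ * v ^ 2 ∧
      w ^ 2 - μ * v ^ 2 ≤ w ^ 2 := by
  have hw0 : 0 ≤ w := by linarith
  have e1 : w ^ 2 / 2 ≤ w ^ 2 - μ * v ^ 2 := by
    have : v ^ 2 ≤ 100 * w ^ 2 := by nlinarith
    nlinarith [sq_nonneg v, sq_nonneg w]
  have e2 : w ^ 2 - μ * v ^ 2 ≤ w ^ 2 := by nlinarith [mul_nonneg hμ (sq_nonneg v)]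
  refine ⟨?_, e1, e2⟩
  have c1 : clip 1 w = w := clip_eq hw0 hw
  have c2 : clip 10 v = v := clip_eq hv (by linarith)
  have c3 : clip 1 (w ^ 2 - μ * v ^ 2) = w ^ 2 - μ * v ^ 2 :=
    clip_eq (by nlinarith [sq_nonneg w]) (by nlinarith)
  simp only [Nf, sS, phi, c1, c2, c3]

lemma le_of_deriv_nonneg {f f' : ℝ → ℝ} {a b : ℝ} (hab : a ≤ b) (hc : ContinuousOn f (Icc a b))
    (hd : ∀ t ∈ Ioo a b, HasDerivAt f (f' t) t) (h : ∀ t ∈ Ioo a b, 0 ≤ f' t) : f a ≤ f b := by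
  have : MonotoneOn f (Icc a b) := by
    apply monotoneOn_of_deriv_nonneg (convex_Icc a b) hc
    · intro x hx; rw [interior_Icc] at hx
      exact (hd x hx).differentiableAt.differentiableWithinAt
    · intro x hx; rw [interior_Icc] at hx
      rw [(hd x hx).deriv]; exact h x hx
  exact this (left_mem_Icc.2 hab) (right_mem_Icc.2 hab) hab

lemma lt_of_deriv_pos {f f' : ℝ → ℝ} {a b : ℝ} (hab : a < b) (hc : ContinuousOn f (Icc a b))
    (hd : ∀ t ∈ Ioo a b, HasDerivAt f (f' t) t) (h : ∀ t ∈ Ioo a b, 0 < f' t) : f a < f b := by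
  have : StrictMonoOn f (Icc a b) := by
    apply strictMonoOn_of_deriv_pos (convex_Icc a b) hc
    intro x hx; rw [interior_Icc] at hx
    rw [(hd x hx).deriv]; exact h x hx
  exact this (left_mem_Icc.2 hab.le) (right_mem_Icc.2 hab.le) hab

lemma tube {X : Type*} [PseudoMetricSpace X] {γ : ℝ → X} (hγ : Continuous γ) {U : Set X}
    (hU : IsOpen U) {t : ℝ} (h : ∀ s ∈ Icc (0:ℝ) t, γ s ∈ U) :
    ∃ ρ > 0, ∀ y, ∀ s ∈ Icc (0:ℝ) t, dist y (γ s) < ρ → y ∈ U := by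
  have hK : IsCompact (γ '' Icc 0 t) := isCompact_Icc.image hγ
  obtain ⟨ρ, hρ, hsub⟩ := hK.exists_thickening_subset_open hU (by rintro _ ⟨s, hs, rfl⟩; exact h s hs)
  refine ⟨ρ, hρ, fun y s hs hd => hsub ?_⟩
  rw [Metric.mem_thickening_iff]
  exact ⟨γ s, mem_image_of_mem _ hs, hd⟩

structure Sol (θ μ δ a : ℝ) (v w : ℝ → ℝ) : Prop where
  cv : Continuous v
  cw : Continuous w
  v0 : v 0 = 0
  w0 : w 0 = a
  dv : ∀ t > 0, HasDerivAt v ((Nf θ μ δ (v t, w t)).1 - 2 / t * v t) t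
  dw : ∀ t > 0, HasDerivAt w ((Nf θ μ δ (v t, w t)).2) t

lemma Sol.dtv {θ μ δ a : ℝ} {v w : ℝ → ℝ} (h : Sol θ μ δ a v w) {t : ℝ} (ht : 0 < t) :
    HasDerivAt (fun t => t ^ 2 * v t) (t ^ 2 * (Nf θ μ δ (v t, w t)).1) t := by
  refine ((hasDerivAt_pow 2 t).mul (h.dv t ht)).congr_deriv ?_
  field_simp; push_cast; ring

lemma Nf_cont {θ μ δ : ℝ} (h1 : 1 ≤ θ) : Continuous (Nf θ μ δ) := by
  unfold Nf phi sS clip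
  have : 0 ≤ θ := by linarith
  fun_prop (disch := assumption)

lemma Sol.pos_near {θ μ δ a : ℝ} {v w : ℝ → ℝ} (h : Sol θ μ δ a v w) (h1 : 1 ≤ θ)
    (hN : 0 < (Nf θ μ δ (0, a)).1) : ∃ τ > 0, ∀ t, 0 < t → t ≤ τ → 0 < v t := by
  have hc : Continuous fun t => (Nf θ μ δ (v t, w t)).1 :=
    ((Nf_cont h1).comp (h.cv.prodMk h.cw)).fst
  have h0 : 0 < (Nf θ μ δ (v 0, w 0)).1 := by rw [h.v0, h.w0]; exact hN
  have := hc.continuousAt.eventually (lt_mem_nhds h0)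
  obtain ⟨τ, hτ, hb⟩ := Metric.eventually_nhds_iff.1 this
  refine ⟨τ / 2, by positivity, fun t ht htτ => ?_⟩
  have := lt_of_deriv_pos (f := fun t => t ^ 2 * v t) ht
    (by have := h.cv; fun_prop) (fun s hs => h.dtv hs.1) (fun s hs => by
      have : 0 < (Nf θ μ δ (v s, w s)).1 := hb (by
        rw [Real.dist_eq, sub_zero, abs_of_pos hs.1]; linarith [hs.2])
      have := hs.1
      positivity)
  simp only [ne_eq, OfNat.ofNat_ne_zero, not_false_eq_true, zero_pow, zero_mul] at this
  exact pos_of_mul_pos_right this (by positivity)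

noncomputable def Hf (θ μ δ : ℝ) (p : ℝ × ℝ) : ℝ :=
  (max (p.2 ^ 2 - μ * p.1 ^ 2) 0) ^ (θ + 1) / (2 * (θ + 1)) - δ * p.2 ^ 2 / 2 +
    (1 - μ * δ) * p.1 ^ 2 / 2

lemma LE {θ : ℝ} (h1 : 1 ≤ θ) (h2 : θ < 2) {v w : ℝ → ℝ} (h : Sol θ 0 0 1 v w) :
    ∃ t, 0 ≤ t ∧ 10 * w t < v t ∧ ∀ s ∈ Icc 0 t, 0 < Hf θ 0 0 (v s, w s) := by
  have hcv := h.cv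
  have hcw := h.cw
  have N1 : ∀ p, 0 ≤ (Nf θ 0 0 p).1 := fun p => by
    have := phi_nonneg θ (sS 0 p)
    have := clip_nonneg 1 p.2
    simp only [Nf, sub_zero]; positivity
  have N2 : ∀ p, (Nf θ 0 0 p).2 ≤ 0 := fun p => by
    have := clip_nonneg 10 p.1
    simp [Nf]; positivity
  have wanti : ∀ s t, 0 ≤ s → s ≤ t → w t ≤ w s := by
    intro s t hs hst
    have := le_of_deriv_nonneg (f := fun t => - w t) hst (by fun_prop)
      (fun x hx => (h.dw x (hs.trans_lt hx.1)).neg) (fun x hx => neg_nonneg.2 (N2 _))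
    linarith
  have w1 : ∀ t, 0 ≤ t → w t ≤ 1 := fun t ht => by
    have := wanti 0 t le_rfl ht; rwa [h.w0] at this
  have vpos : ∀ t, 0 < t → 0 < v t := by
    obtain ⟨τ, hτ, hp⟩ := h.pos_near h1 (by
      simp [Nf, sS, phi, clip])
    intro t ht
    rcases le_total t τ with hle | hle
    · exact hp t ht hle
    · have := le_of_deriv_nonneg (f := fun t => t ^ 2 * v t) hle (by fun_prop)
        (fun x hx => h.dtv (hτ.trans hx.1)) (fun x hx => mul_nonneg (sq_nonneg _) (N1 _))
      have h3 := hp τ hτ le_rfl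
      have : 0 < t ^ 2 * v t := lt_of_lt_of_le (by positivity) this
      exact pos_of_mul_pos_right this (by positivity)
  have Hpos : ∀ t, 0 ≤ t → 0 < Hf θ 0 0 (v t, w t) := by
    intro t ht
    rcases ht.eq_or_lt with rfl | ht
    · rw [h.v0, h.w0]; simp [Hf]; linarith
    · have := vpos t ht
      have e : 0 ≤ (max (w t ^ 2) 0) ^ (θ + 1) := by positivity
      simp only [Hf, zero_mul, sub_zero, zero_div, one_mul]
      positivity
  by_contra hcon
  push Not at hcon
  have cone : ∀ t, 0 ≤ t → v t ≤ 10 * w t := by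
    intro t ht
    by_contra hlt
    push Not at hlt
    obtain ⟨s, hs, hs'⟩ := hcon t ht hlt
    exact absurd (Hpos s hs.1) (not_lt.2 hs')
  have wpos : ∀ t, 0 ≤ t → 0 < w t := by
    intro t ht
    rcases ht.eq_or_lt with rfl | ht
    · rw [h.w0]; norm_num
    · linarith [vpos t ht, cone t ht.le]
  have Neq : ∀ t, 0 < t → Nf θ 0 0 (v t, w t) = ((w t ^ 2) ^ θ * w t, - v t) := by
    intro t ht
    have := (Nf_eq (θ := θ) (δ := 0) (vpos t ht).le (cone t ht.le) (w1 t ht.le) le_rfl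
      (by norm_num)).1
    simpa using this
  have dv : ∀ t, 0 < t → HasDerivAt v ((w t ^ 2) ^ θ * w t - 2 / t * v t) t := by
    intro t ht; have := h.dv t ht; rwa [Neq t ht] at this
  have dw : ∀ t, 0 < t → HasDerivAt w (- v t) t := by
    intro t ht; have := h.dw t ht; rwa [Neq t ht] at this
  have dtv : ∀ t, 0 < t → HasDerivAt (fun t => t ^ 2 * v t) (t ^ 2 * ((w t ^ 2) ^ θ * w t)) t := by
    intro t ht; have := h.dtv ht; rwa [Neq t ht] at this
  have Wpos : ∀ t, 0 ≤ t → 0 < (w t ^ 2) ^ θ := fun t ht =>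
    Real.rpow_pos_of_pos (by have := wpos t ht; positivity) _
  -- t v ≤ w
  have tv : ∀ t, 0 < t → t * v t ≤ w t := by
    intro t0 ht0
    by_contra hlt
    push Not at hlt
    set c := t0 * v t0 - w t0 with hc
    have hcpos : 0 < c := by linarith
    have h3 : ∀ t, t0 ≤ t → c ≤ t * v t := by
      intro t ht
      have := le_of_deriv_nonneg (f := fun t => t * v t - w t)
        (f' := fun t => t * ((w t ^ 2) ^ θ * w t)) ht (by fun_prop)
        (fun x hx => by
          have hx0 : 0 < x := ht0.trans hx.1
          refine (((hasDerivAt_id x).mul (dv x hx0)).sub (dw x hx0)).congr_deriv ?_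
          simp only [id]; field_simp; ring)
        (fun x hx => by
          have hx0 : 0 < x := ht0.trans hx.1
          have := Wpos x hx0.le
          have := wpos x hx0.le
          positivity)
      linarith [wpos t (ht0.le.trans ht)]
    have hT : t0 ≤ t0 * Real.exp (2 / c) := by
      have : 1 ≤ Real.exp (2 / c) := Real.one_le_exp (by positivity)
      nlinarith
    have h4 := le_of_deriv_nonneg (f := fun t => - w t - c * Real.log t)
      (f' := fun t => v t - c / t) hT
      (by
        refine ContinuousOn.sub (by fun_prop) (ContinuousOn.mul continuousOn_const ?_)
        exact Real.continuousOn_log.mono fun x hx => (ht0.trans_le hx.1).ne')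
      (fun x hx => by
          have hx0 : 0 < x := ht0.trans hx.1
          refine ((dw x hx0).neg.sub ((Real.hasDerivAt_log hx0.ne').const_mul c)).congr_deriv ?_
          ring)
      (fun x hx => by
        have hx0 : 0 < x := ht0.trans hx.1
        have := h3 x hx.1.le
        rw [sub_nonneg, div_le_iff₀ hx0]; linarith)
    rw [Real.log_mul ht0.ne' (Real.exp_pos _).ne', Real.log_exp, mul_add,
      mul_div_cancel₀ _ hcpos.ne'] at h4
    linarith [wpos (t0 * Real.exp (2 / c)) (by positivity), w1 t0 ht0.le]
  -- t² w^{2θ} ≤ 3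
  have vlow : ∀ t, 0 < t → t / 3 * ((w t ^ 2) ^ θ * w t) ≤ v t := by
    intro t ht
    have := le_of_deriv_nonneg (f := fun s => s ^ 2 * v s - s ^ 3 / 3 * ((w t ^ 2) ^ θ * w t))
      (f' := fun s => s ^ 2 * ((w s ^ 2) ^ θ * w s) - s ^ 2 * ((w t ^ 2) ^ θ * w t)) ht.le
      (by fun_prop)
      (fun s hs => by
        refine ((dtv s hs.1).sub (((hasDerivAt_pow 3 s).div_const 3).mul_const _)).congr_deriv ?_
        push_cast; ring)
      (fun s hs => by
        have a1 := wanti s t hs.1.le hs.2.le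
        have a2 := wpos t ht.le
        have : (w t ^ 2) ^ θ * w t ≤ (w s ^ 2) ^ θ * w s := by gcongr
        nlinarith [sq_nonneg s])
    simp only [ne_eq, OfNat.ofNat_ne_zero, not_false_eq_true, zero_pow, zero_mul, zero_div,
      sub_zero] at this
    have h3 : t ^ 2 * (t / 3 * ((w t ^ 2) ^ θ * w t)) ≤ t ^ 2 * v t := by nlinarith
    exact le_of_mul_le_mul_left h3 (by positivity)
  have up : ∀ t, 0 < t → t ^ 2 * (w t ^ 2) ^ θ ≤ 3 := by
    intro t ht
    have h5 := le_of_deriv_nonneg (f := fun s => (w s ^ 2) ^ (-θ) - s ^ 2 / 3)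
      (f' := fun s => 2 * w s * (- v s) * (-θ) * (w s ^ 2) ^ (-θ - 1) - 2 * s / 3) ht.le
      (by
        refine ContinuousOn.sub (ContinuousOn.rpow_const (by fun_prop) fun s hs => Or.inl ?_)
          (by fun_prop)
        have := wpos s hs.1; positivity)
      (fun s hs => by
        have hw := wpos s hs.1.le
        refine ((((dw s hs.1).pow 2).rpow_const (Or.inl (by simp; positivity))).sub
          ((hasDerivAt_pow 2 s).div_const 3)).congr_deriv ?_
        simp)
      (fun s hs => by
        have hw := wpos s hs.1.le
        have hs0 := hs.1
        have hl := vlow s hs.1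
        have e : (w s ^ 2) ^ (-θ - 1) * ((w s ^ 2) ^ θ * w s * w s) = 1 := by
          have : (w s ^ 2) ^ θ * w s * w s = (w s ^ 2) ^ (θ + 1) := by
            rw [Real.rpow_add (by positivity), Real.rpow_one]; ring
          rw [this, ← Real.rpow_add (by positivity)]; simp
        have hp : 0 < (w s ^ 2) ^ (-θ - 1) := Real.rpow_pos_of_pos (by positivity) _
        have e2 : 2 * w s * θ * (w s ^ 2) ^ (-θ - 1) * (s / 3 * ((w s ^ 2) ^ θ * w s)) =
          2 * θ * s / 3 := by
          linear_combination (2 * θ * s / 3) * e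
        have e3 : 2 * w s * θ * (w s ^ 2) ^ (-θ - 1) * (s / 3 * ((w s ^ 2) ^ θ * w s)) ≤
          2 * w s * θ * (w s ^ 2) ^ (-θ - 1) * v s := by gcongr
        nlinarith)
    have h6 : t ^ 2 / 3 ≤ (w t ^ 2) ^ (-θ) := by
      have : 0 ≤ (w 0 ^ 2) ^ (-θ) := Real.rpow_nonneg (sq_nonneg _) _
      linarith
    rw [Real.rpow_neg (sq_nonneg _)] at h6
    have := Wpos t ht.le
    rw [le_inv_comm₀ (by positivity) this, inv_div, le_div_iff₀ (by positivity)] at h6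
    linarith
  -- Pohozaev
  set P : ℝ → ℝ := fun t => t ^ 3 * (v t ^ 2 / 2 + (w t ^ 2) ^ (θ + 1) / (2 * θ + 2)) -
    t ^ 2 * v t * w t / 2 with hP
  have Pc : Continuous P := by
    have : 0 ≤ θ + 1 := by linarith
    rw [hP]; fun_prop (disch := assumption)
  have Pd : ∀ t, 0 < t → HasDerivAt P (t ^ 2 * ((w t ^ 2) ^ θ * w t ^ 2) *
      ((2 - θ) / (2 * θ + 2))) t := by
    intro t ht
    have a1 := ((dv t ht).pow 2).div_const 2
    have a2 := (((dw t ht).pow 2).rpow_const (p := θ + 1) (Or.inr (by linarith))).div_const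
      (2 * θ + 2)
    have a3 := (hasDerivAt_pow 3 t).mul (a1.add a2)
    have a4 := ((dtv t ht).mul (dw t ht)).div_const 2
    refine (a3.sub a4).congr_deriv ?_
    have e : (w t ^ 2) ^ (θ + 1) = (w t ^ 2) ^ θ * w t ^ 2 := by
      rw [Real.rpow_add (by have := wpos t ht.le; positivity), Real.rpow_one]
    simp only [Pi.pow_apply, Pi.add_apply, e, add_sub_cancel_right]
    push_cast
    have : 2 * θ + 2 ≠ 0 := by linarith
    field_simp
    ring
  have Pd0 : ∀ t, 0 < t → 0 < t ^ 2 * ((w t ^ 2) ^ θ * w t ^ 2) * ((2 - θ) / (2 * θ + 2)) := by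
    intro t ht
    have := Wpos t ht.le
    have := wpos t ht.le
    have : 0 < 2 - θ := by linarith
    positivity
  have P1 : 0 < P 1 := by
    have := lt_of_deriv_pos (f := P) zero_lt_one Pc.continuousOn (fun t ht => Pd t ht.1)
      (fun t ht => Pd0 t ht.1)
    simpa [hP] using this
  have Plow : ∀ t, 1 ≤ t → P 1 ≤ P t := fun t ht =>
    le_of_deriv_nonneg ht Pc.continuousOn (fun s hs => Pd s (by linarith [hs.1]))
      (fun s hs => (Pd0 s (by linarith [hs.1])).le)
  have Pup : ∀ t, 1 ≤ t → P t ≤ 2 * (t * w t ^ 2) := by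
    intro t ht
    have ht0 : 0 < t := by linarith
    have hw := wpos t ht0.le
    have hv := vpos t ht0
    have a1 := tv t ht0
    have a2 := up t ht0
    have e : (w t ^ 2) ^ (θ + 1) = (w t ^ 2) ^ θ * w t ^ 2 := by
      rw [Real.rpow_add (by positivity), Real.rpow_one]
    have b1 : t ^ 3 * (v t ^ 2 / 2) ≤ t * w t ^ 2 / 2 := by
      have : (t * v t) ^ 2 ≤ w t ^ 2 := by gcongr
      nlinarith
    have b2 : t ^ 3 * ((w t ^ 2) ^ (θ + 1) / (2 * θ + 2)) ≤ t * w t ^ 2 * (3 / 4) := by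
      have : (w t ^ 2) ^ (θ + 1) / (2 * θ + 2) ≤ (w t ^ 2) ^ (θ + 1) / 4 := by
        gcongr; linarith
      calc _ ≤ t ^ 3 * ((w t ^ 2) ^ (θ + 1) / 4) := by gcongr
        _ = t * w t ^ 2 * (t ^ 2 * (w t ^ 2) ^ θ / 4) := by rw [e]; ring
        _ ≤ _ := by gcongr
    have b3 : 0 ≤ t ^ 2 * v t * w t / 2 := by positivity
    have b4 : 0 ≤ t * w t ^ 2 := by positivity
    simp only [hP, mul_add]
    linarith
  set c := P 1 / 2 with hc
  have hc0 : 0 < c := by positivity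
  have fin : ∀ t, 1 ≤ t → c ^ θ * t ^ (2 - θ) ≤ 3 := by
    intro t ht
    have ht0 : 0 < t := by linarith
    have a1 : c / t ≤ w t ^ 2 := by
      rw [div_le_iff₀ ht0]; linarith [Plow t ht, Pup t ht]
    have a2 : (c / t) ^ θ ≤ (w t ^ 2) ^ θ := by gcongr
    calc _ = t ^ 2 * (c / t) ^ θ := by
          rw [Real.div_rpow hc0.le ht0.le, Real.rpow_sub ht0, Real.rpow_ofNat]; ring
      _ ≤ t ^ 2 * (w t ^ 2) ^ θ := by gcongr
      _ ≤ 3 := up t ht0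
  have lim := (tendsto_rpow_atTop (by linarith : 0 < 2 - θ)).const_mul_atTop
    (Real.rpow_pos_of_pos hc0 θ)
  obtain ⟨t, ht1, ht2⟩ := ((lim.eventually_gt_atTop 3).and (eventually_ge_atTop 1)).exists
  linarith [fin t ht2]

lemma Hf_cont {θ : ℝ} (h1 : 1 ≤ θ) :
    Continuous fun q : (ℝ × ℝ) × (ℝ × ℝ) => Hf θ q.1.1 q.1.2 q.2 := by
  unfold Hf
  have : 0 ≤ θ + 1 := by linarith
  fun_prop (disch := assumption)

lemma Hf_cont1 {θ : ℝ} (h1 : 1 ≤ θ) (μ δ : ℝ) : Continuous (Hf θ μ δ) := by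
  unfold Hf
  have : 0 ≤ θ + 1 := by linarith
  fun_prop (disch := assumption)

lemma Hf_deriv {θ μ δ a : ℝ} (h1 : 1 ≤ θ) (hμ : 0 ≤ μ) (hμ' : μ ≤ 1/200)
    {v w : ℝ → ℝ} (h : Sol θ μ δ a v w) {t : ℝ} (ht : 0 < t) (hv : 0 ≤ v t)
    (hvw : v t ≤ 10 * w t) (hw : 0 < w t) (hw1 : w t ≤ 1) :
    HasDerivAt (fun t => Hf θ μ δ (v t, w t))
      (-(2 / t * v t ^ 2 * (1 - μ * δ - μ * (w t ^ 2 - μ * v t ^ 2) ^ θ))) t := by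
  obtain ⟨e, e1, e2⟩ := Nf_eq (θ := θ) (δ := δ) hv hvw hw1 hμ hμ'
  have dv := h.dv t ht
  have dw := h.dw t ht
  rw [e] at dv dw
  have hs : 0 < w t ^ 2 - μ * v t ^ 2 := lt_of_lt_of_le (by positivity) e1
  have ds := (dw.pow 2).sub ((dv.pow 2).const_mul μ)
  have d1 := ((ds.rpow_const (p := θ + 1) (Or.inr (by linarith))).div_const (2 * (θ + 1)))
  have d2 := ((dw.pow 2).const_mul δ).div_const 2
  have d3 := ((dv.pow 2).const_mul (1 - μ * δ)).div_const 2
  refine (((d1.sub d2).add d3).congr_of_eventuallyEq ?_).congr_deriv ?_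
  · have hc : ContinuousAt (fun t => w t ^ 2 - μ * v t ^ 2) t := by
      have := h.cv; have := h.cw; fun_prop
    filter_upwards [hc.eventually (lt_mem_nhds hs)] with s hs'
    simp [Hf, max_eq_left hs'.le]
  · simp only [Pi.pow_apply, Pi.sub_apply, add_sub_cancel_right]
    push_cast
    have : θ + 1 ≠ 0 := by linarith
    field_simp
    ring

lemma H_zero {θ μ δ w : ℝ} (h1 : 1 ≤ θ) (hδ : 0 < δ) (hw : 0 < w)
    (h : 0 ≤ Hf θ μ δ (0, w)) : 2 * δ ≤ (w ^ 2) ^ θ := by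
  have e : (w ^ 2) ^ (θ + 1) = (w ^ 2) ^ θ * w ^ 2 := by
    rw [Real.rpow_add (by positivity), Real.rpow_one]
  have hm : max (w ^ 2) 0 = w ^ 2 := max_eq_left (sq_nonneg _)
  simp only [Hf, ne_eq, OfNat.ofNat_ne_zero, not_false_eq_true, zero_pow, mul_zero, sub_zero,
    zero_div, add_zero, hm, e] at h
  have h3 : δ * w ^ 2 / 2 ≤ (w ^ 2) ^ θ * w ^ 2 / (2 * (θ + 1)) := by linarith
  rw [le_div_iff₀ (by linarith)] at h3
  have h4 : (δ * (θ + 1)) * w ^ 2 ≤ (w ^ 2) ^ θ * w ^ 2 := by linarith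
  have := le_of_mul_le_mul_right h4 (by positivity)
  nlinarith

lemma N1_zero_pos {θ μ δ w : ℝ} (h1 : 1 ≤ θ) (hδ : 0 < δ) (hw : 0 < w) (hw1 : w ≤ 1)
    (hμ : 0 ≤ μ) (hμ' : μ ≤ 1/200)
    (h : 0 ≤ Hf θ μ δ (0, w)) : 0 < (Nf θ μ δ (0, w)).1 := by
  rw [(Nf_eq (θ := θ) (δ := δ) le_rfl (by linarith : 0 ≤ 10 * w) hw1 hμ hμ').1]
  have := H_zero h1 hδ hw h
  simp only [ne_eq, OfNat.ofNat_ne_zero, not_false_eq_true, zero_pow, mul_zero, sub_zero]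
  apply mul_pos _ hw
  linarith

lemma N2_nonpos {θ μ δ : ℝ} (h1 : 1 ≤ θ) (hμ : 0 ≤ μ) (hμ' : μ ≤ 1/200) (hδ : 0 ≤ δ)
    (hδ' : δ ≤ 1) (p : ℝ × ℝ) : (Nf θ μ δ p).2 ≤ 0 := by
  have f1 := phi_le_one h1 (sS μ p)
  have f0 := phi_nonneg θ (sS μ p)
  simp only [Nf, Left.neg_nonpos_iff]
  apply mul_nonneg _ (clip_nonneg _ _)
  nlinarith

lemma Sol.wanti {θ μ δ a : ℝ} {v w : ℝ → ℝ} (h : Sol θ μ δ a v w) (h1 : 1 ≤ θ) (hμ : 0 ≤ μ)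
    (hμ' : μ ≤ 1/200) (hδ : 0 ≤ δ) (hδ' : δ ≤ 1) :
    ∀ s t, 0 ≤ s → s ≤ t → w t ≤ w s := by
  intro s t hs hst
  have hcw := h.cw
  have := le_of_deriv_nonneg (f := fun t => - w t) hst (by fun_prop)
    (fun x hx => (h.dw x (hs.trans_lt hx.1)).neg)
    (fun x hx => neg_nonneg.2 (N2_nonpos h1 hμ hμ' hδ hδ' _))
  linarith

lemma exp_mul_deriv (c : ℝ) {w : ℝ → ℝ} {w' s : ℝ} (hw : HasDerivAt w w' s) :
    HasDerivAt (fun s => Real.exp (c * s) * w s) (Real.exp (c * s) * (c * w s + w')) s := by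
  have e : HasDerivAt (fun s : ℝ => c * s) c s := by
    simpa using (hasDerivAt_id s).const_mul c
  refine (e.exp.mul hw).congr_deriv ?_
  ring

lemma Sol.early {θ μ δ a : ℝ} (h1 : 1 ≤ θ) (hμ : 0 ≤ μ) (hμ' : μ ≤ 1/200)
    (hδ : 0 < δ) (hδ' : δ ≤ 1/2) (ha : 0 < a)
    {v w : ℝ → ℝ} (h : Sol θ μ δ a v w) : ∀ t, 0 < t → t < 1 → v t < 10 * w t := by
  have hcv := h.cv
  have hcw := h.cw
  have wanti := h.wanti h1 hμ hμ' hδ.le (by linarith)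
  have wa : ∀ t, 0 ≤ t → w t ≤ a := fun t ht => by
    have := wanti 0 t le_rfl ht; rwa [h.w0] at this
  have vup : ∀ t, 0 < t → v t ≤ a * t / 3 := by
    intro t ht
    have := le_of_deriv_nonneg (f := fun s => a * s ^ 3 / 3 - s ^ 2 * v s)
      (f' := fun s => a * s ^ 2 - s ^ 2 * (Nf θ μ δ (v s, w s)).1) ht.le (by fun_prop)
      (fun s hs => by
        refine ((((hasDerivAt_pow 3 s).const_mul a).div_const 3).sub (h.dtv hs.1)).congr_deriv ?_
        push_cast; ring)
      (fun s hs => by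
        have f1 := phi_le_one h1 (sS μ (v s, w s))
        have f0 := phi_nonneg θ (sS μ (v s, w s))
        have c0 := clip_nonneg 1 (w s)
        have c1 : clip 1 (w s) ≤ a := by
          rcases le_total 0 (w s) with hw | hw
          · exact (clip_le_self hw).trans (wa s hs.1.le)
          · rw [clip_neg zero_le_one hw]; exact ha.le
        have : (Nf θ μ δ (v s, w s)).1 ≤ a := by
          simp only [Nf]
          nlinarith
        nlinarith [sq_nonneg s])
    simp only [ne_eq, OfNat.ofNat_ne_zero, not_false_eq_true, zero_pow, zero_mul, zero_div,
      sub_zero, mul_zero] at this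
    have h3 : t ^ 2 * v t ≤ t ^ 2 * (a * t / 3) := by nlinarith
    exact le_of_mul_le_mul_left h3 (by positivity)
  have wlow : ∀ t, 0 ≤ t → a - a * t ^ 2 / 6 ≤ w t := by
    intro t ht
    have := le_of_deriv_nonneg (f := fun s => w s + a * s ^ 2 / 6)
      (f' := fun s => (Nf θ μ δ (v s, w s)).2 + a * s / 3) ht (by fun_prop)
      (fun s hs => by
        refine ((h.dw s hs.1).add (((hasDerivAt_pow 2 s).const_mul a).div_const 6)).congr_deriv ?_
        push_cast; ring)
      (fun s hs => by
        have f1 := phi_le_one h1 (sS μ (v s, w s))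
        have f0 := phi_nonneg θ (sS μ (v s, w s))
        have c0 := clip_nonneg 10 (v s)
        have hs0 := hs.1
        have c1 : clip 10 (v s) ≤ a * s / 3 := by
          rcases le_total 0 (v s) with hw | hw
          · exact (clip_le_self hw).trans (vup s hs.1)
          · rw [clip_neg (by norm_num) hw]; positivity
        simp only [Nf]
        have : (1 - μ * δ - μ * phi θ (sS μ (v s, w s))) ≤ 1 := by
          have := mul_nonneg hμ hδ.le
          have := mul_nonneg hμ f0
          linarith
        nlinarith)
    simp only [h.w0] at this
    linarith
  intro t ht ht1
  have := vup t ht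
  have := wlow t ht.le
  have : a * t ≤ a := by nlinarith
  have : a * t ^ 2 ≤ a := by nlinarith [mul_pos ha ht]
  linarith

set_option maxHeartbeats 2000000 in
lemma trap {θ μ δ a : ℝ} (h1 : 1 ≤ θ) (hμ : 0 ≤ μ) (hμ' : μ ≤ 1/200)
    (hδ : 0 < δ) (hδ' : δ ≤ 1/2) (ha : 0 < a) (ha1 : a ≤ 1)
    {v w : ℝ → ℝ} (h : Sol θ μ δ a v w)
    (hA : ¬ ∃ t, 0 ≤ t ∧ 10 * w t < v t ∧ ∀ s ∈ Icc 0 t, 0 < Hf θ μ δ (v s, w s))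
    (hB : ¬ ∃ t, 0 ≤ t ∧ Hf θ μ δ (v t, w t) < 0 ∧ ∀ s ∈ Icc 0 t, v s < 10 * w s) :
    ∀ t, 0 < t → 0 < v t ∧ v t < 10 * w t := by
  have hcv := h.cv
  have hcw := h.cw
  have hcH : Continuous fun t => Hf θ μ δ (v t, w t) :=
    (Hf_cont1 h1 μ δ).comp (hcv.prodMk hcw)
  have wanti := h.wanti h1 hμ hμ' hδ.le (by linarith)
  have wa : ∀ t, 0 ≤ t → w t ≤ a := fun t ht => by
    have := wanti 0 t le_rfl ht; rwa [h.w0] at this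
  have H0 : 0 ≤ Hf θ μ δ (0, a) := by
    by_contra hlt
    push Not at hlt
    apply hB
    refine ⟨0, le_rfl, by rw [h.v0, h.w0]; exact hlt, fun s hs => ?_⟩
    have : s = 0 := le_antisymm hs.2 hs.1
    rw [this, h.v0, h.w0]; linarith
  obtain ⟨τ₀, hτ₀, hvτ⟩ := h.pos_near h1 (N1_zero_pos h1 hδ ha ha1 hμ hμ' H0)
  have early := h.early h1 hμ hμ' hδ hδ' ha
  set τ := min τ₀ (1/2) with hτd
  have hτ : 0 < τ := lt_min hτ₀ (by norm_num)
  have good0 : ∀ t, 0 < t → t ≤ τ → 0 < v t ∧ v t < 10 * w t := fun t ht htτ =>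
    ⟨hvτ t ht (htτ.trans (min_le_left _ _)),
      early t ht (by linarith [htτ.trans (min_le_right _ _)])⟩
  by_contra hcon
  push Not at hcon
  obtain ⟨t1, ht1, hbad1⟩ := hcon
  have badof : ∀ t, ¬ (0 < v t ∧ v t < 10 * w t) → v t ≤ 0 ∨ 10 * w t ≤ v t := by
    intro t hno
    rcases le_or_gt (v t) 0 with h' | h'
    · exact Or.inl h'
    · exact Or.inr (not_lt.1 fun h'' => hno ⟨h', h''⟩)
  set S : Set ℝ := {t | τ ≤ t ∧ (v t ≤ 0 ∨ 10 * w t ≤ v t)} with hS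
  have hScl : IsClosed S := by
    apply IsClosed.inter (isClosed_le continuous_const continuous_id)
    exact (isClosed_le hcv continuous_const).union (isClosed_le (by fun_prop) hcv)
  have hSne : S.Nonempty := by
    refine ⟨t1, ?_, badof t1 fun h' => absurd (hbad1 h'.1) (not_le.2 h'.2)⟩
    by_contra hlt
    have := good0 t1 ht1 (not_le.1 hlt).le
    exact absurd (hbad1 this.1) (not_le.2 this.2)
  have hSb : BddBelow S := ⟨τ, fun t ht => ht.1⟩
  obtain ⟨T, hTS, hTinf⟩ : ∃ T, T ∈ S ∧ ∀ t ∈ S, T ≤ t :=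
    ⟨sInf S, hScl.csInf_mem hSne hSb, fun t ht => csInf_le hSb ht⟩
  have hT0 : 0 < T := hτ.trans_le hTS.1
  have inn : ∀ t, 0 < t → t < T → 0 < v t ∧ v t < 10 * w t := by
    intro t ht htT
    by_contra hno
    rcases le_or_gt τ t with hle | hlt
    · exact absurd (hTinf t ⟨hle, badof t hno⟩) (not_le.2 htT)
    · exact hno (good0 t ht hlt.le)
  have lim_le : ∀ f : ℝ → ℝ, Continuous f → (∀ t, 0 < t → t < T → 0 ≤ f t) → 0 ≤ f T := by
    intro f hf hpos
    have : T ∈ closure (Ioo 0 T) := by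
      rw [closure_Ioo hT0.ne]; exact right_mem_Icc.2 hT0.le
    exact (closure_minimal (fun t ht => hpos t ht.1 ht.2)
      (isClosed_le continuous_const hf)) this
  have vT : 0 ≤ v T := lim_le v hcv fun t a b => (inn t a b).1.le
  have cT : 0 ≤ 10 * w T - v T := lim_le (fun t => 10 * w t - v t) (by fun_prop)
    fun t a b => by linarith [(inn t a b).2]
  -- w T > 0
  have wT : 0 < w T := by
    have := le_of_deriv_nonneg (f := fun s => Real.exp (10 * s) * w s)
      (f' := fun s => Real.exp (10 * s) * (10 * w s + (Nf θ μ δ (v s, w s)).2)) hT0.le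
      (by fun_prop)
      (fun s hs => exp_mul_deriv 10 (h.dw s hs.1))
      (fun s hs => by
        obtain ⟨b1, b2⟩ := inn s hs.1 hs.2
        have f1 := phi_le_one h1 (sS μ (v s, w s))
        have f0 := phi_nonneg θ (sS μ (v s, w s))
        have c0 := clip_nonneg 10 (v s)
        have c1 : clip 10 (v s) ≤ v s := clip_le_self b1.le
        apply mul_nonneg (Real.exp_pos _).le
        simp only [Nf]
        have : (1 - μ * δ - μ * phi θ (sS μ (v s, w s))) ≤ 1 := by
          have := mul_nonneg hμ hδ.le
          have := mul_nonneg hμ f0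
          linarith
        nlinarith)
    simp only [mul_zero, Real.exp_zero, one_mul, h.w0] at this
    exact pos_of_mul_pos_right (ha.trans_le this) (Real.exp_pos _).le
  have wT1 : w T ≤ 1 := (wa T hT0.le).trans ha1
  have Hnn : ∀ t, 0 ≤ t → t < T → 0 ≤ Hf θ μ δ (v t, w t) := by
    intro t ht htT
    by_contra hlt
    push Not at hlt
    apply hB
    refine ⟨t, ht, hlt, fun s hs => ?_⟩
    rcases hs.1.eq_or_lt with h0 | h0
    · rw [← h0, h.v0, h.w0]; linarith
    · exact (inn s h0 (hs.2.trans_lt htT)).2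
  have HT : 0 ≤ Hf θ μ δ (v T, w T) := lim_le _ hcH fun t a b => Hnn t a.le b
  have key : v T = 0 ∨ v T = 10 * w T := by
    rcases hTS.2 with h' | h'
    · exact Or.inl (le_antisymm h' vT)
    · exact Or.inr (le_antisymm (by linarith) h')
  have dv := h.dv T hT0
  have dw := h.dw T hT0
  rcases key with hz | hz
  · rw [hz] at HT dv
    have hp := N1_zero_pos h1 hδ wT wT1 hμ hμ' HT
    simp only [mul_zero, sub_zero] at dv
    have := dv.tendsto_slope.eventually (lt_mem_nhds hp)
    have h3 : ∀ᶠ s in 𝓝[<] T, 0 < slope v T s :=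
      this.filter_mono (nhdsWithin_mono _ fun x hx => ne_of_lt hx)
    have h4 : ∀ᶠ s in 𝓝[<] T, s ∈ Ioo 0 T := Ioo_mem_nhdsLT hT0
    obtain ⟨s, hs, hs2⟩ := (h3.and h4).exists
    rw [slope_def_field, hz, sub_zero] at hs
    have := (inn s hs2.1 hs2.2).1
    have h5 : v s / (s - T) < 0 := div_neg_of_pos_of_neg this (by linarith [hs2.2])
    linarith
  · have hT1 : 1 ≤ T := by
      by_contra hlt
      linarith [early T hT0 (not_le.1 hlt)]
    obtain ⟨e, e1, e2⟩ := Nf_eq (θ := θ) (δ := δ) vT (by linarith) wT1 hμ hμ'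
    set s := w T ^ 2 - μ * v T ^ 2 with hs
    have hs0 : 0 < s := lt_of_lt_of_le (by positivity) e1
    have hsθ : 0 < s ^ θ := Real.rpow_pos_of_pos hs0 _
    have hsθ1 : s ^ θ ≤ 1 := Real.rpow_le_one hs0.le (by nlinarith) (by linarith)
    have HTpos : 0 < Hf θ μ δ (v T, w T) := by
      have e3 : 0 < (max s 0) ^ (θ + 1) / (2 * (θ + 1)) := by
        rw [max_eq_left hs0.le]
        have := Real.rpow_pos_of_pos hs0 (θ + 1)
        positivity
      simp only [Hf, ← hs]
      have hw2 : 0 < w T ^ 2 := by positivity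
      have : μ * δ ≤ 1 / 2 := by nlinarith
      have h5 : δ * w T ^ 2 ≤ 1 / 2 * w T ^ 2 := by gcongr
      have h6 : 1 / 2 * v T ^ 2 ≤ (1 - μ * δ) * v T ^ 2 := by gcongr; linarith
      have h7 : v T ^ 2 = 100 * w T ^ 2 := by rw [hz]; ring
      linarith
    have Hall : ∀ t ∈ Icc 0 T, 0 < Hf θ μ δ (v t, w t) := by
      intro t ht
      have := le_of_deriv_nonneg (f := fun s => - Hf θ μ δ (v s, w s))
        (f' := fun t => (2 / t * v t ^ 2 * (1 - μ * δ - μ * (w t ^ 2 - μ * v t ^ 2) ^ θ)))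
        ht.2 hcH.neg.continuousOn
        (fun r hr => by
          have hr0 : 0 < r := ht.1.trans_lt hr.1
          obtain ⟨b1, b2⟩ := inn r hr0 hr.2
          have := (Hf_deriv h1 hμ hμ' h hr0 b1.le b2.le (by linarith)
            ((wa r hr0.le).trans ha1)).neg
          rwa [neg_neg] at this)
        (fun r hr => by
          have hr0 : 0 < r := ht.1.trans_lt hr.1
          obtain ⟨b1, b2⟩ := inn r hr0 hr.2
          have hw1 := ((wa r hr0.le).trans ha1)
          obtain ⟨-, g1, g2⟩ := Nf_eq (θ := θ) (δ := δ) b1.le b2.le hw1 hμ hμ'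
          have q1 : (w r ^ 2 - μ * v r ^ 2) ^ θ ≤ 1 :=
            Real.rpow_le_one (by nlinarith [sq_nonneg (w r)]) (by nlinarith) (by linarith)
          have : 0 ≤ 1 - μ * δ - μ * (w r ^ 2 - μ * v r ^ 2) ^ θ := by nlinarith
          positivity)
      linarith
    rw [e] at dv dw
    have dd := dv.sub (dw.const_mul 10)
    have hp : 0 < (s ^ θ - δ) * w T - 2 / T * v T -
        10 * -((1 - μ * δ - μ * s ^ θ) * v T) := by
      have g1 : 2 / T ≤ 2 := by rw [div_le_iff₀ hT0]; linarith
      have g2 : 1 / 2 ≤ 1 - μ * δ - μ * s ^ θ := by nlinarith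
      have g3 : 2 / T * v T ≤ 2 * v T := by gcongr
      have g4 : 1 / 2 * v T ≤ (1 - μ * δ - μ * s ^ θ) * v T := by gcongr
      nlinarith
    have h3 : ∀ᶠ r in 𝓝[>] T, 0 < slope (v - fun y => 10 * w y) T r :=
      (dd.tendsto_slope.eventually (lt_mem_nhds hp)).filter_mono
        (nhdsWithin_mono _ fun x hx => ne_of_gt hx)
    have h4 : ∀ᶠ r in 𝓝 T, 0 < Hf θ μ δ (v r, w r) :=
      hcH.continuousAt.eventually (lt_mem_nhds HTpos)
    obtain ⟨ρ, hρ, hball⟩ := Metric.eventually_nhds_iff.1 h4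
    have h5 : ∀ᶠ r in 𝓝[>] T, r ∈ Ioo T (T + ρ) := Ioo_mem_nhdsGT (by linarith)
    obtain ⟨r, hr1, hr2⟩ := (h3.and h5).exists
    apply hA
    refine ⟨r, by linarith [hr2.1], ?_, fun x hx => ?_⟩
    · rw [slope_def_field] at hr1
      have := (div_pos_iff_of_pos_right (by linarith [hr2.1])).1 hr1
      simp only [Pi.sub_apply, hz] at this
      linarith
    · rcases le_total x T with hxT | hxT
      · exact Hall x ⟨hx.1, hxT⟩
      · apply hball
        rw [Real.dist_eq, abs_of_nonneg (by linarith)]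
        linarith [hx.2, hr2.2]

set_option maxHeartbeats 2000000 in
lemma decay {θ μ δ a : ℝ} (h1 : 1 ≤ θ) (h2 : θ < 2) (hμ : 0 ≤ μ) (hμ' : μ ≤ 1/200)
    (hδ : 0 < δ) (hδ' : δ ≤ 1/2) (ha1 : a ≤ 1)
    {v w : ℝ → ℝ} (h : Sol θ μ δ a v w)
    (hB : ¬ ∃ t, 0 ≤ t ∧ Hf θ μ δ (v t, w t) < 0 ∧ ∀ s ∈ Icc 0 t, v s < 10 * w s)
    (ha : 0 < a) (inn : ∀ t, 0 < t → 0 < v t ∧ v t < 10 * w t) :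
    ∃ C > 0, ∃ σ > 0, ∀ t, 0 ≤ t → w t ≤ C * Real.exp (-σ * t) := by
  have hcv := h.cv
  have hcw := h.cw
  have wanti := h.wanti h1 hμ hμ' hδ.le (by linarith)
  have w1 : ∀ t, 0 ≤ t → w t ≤ 1 := fun t ht => by
    have := wanti 0 t le_rfl ht; rw [h.w0] at this; linarith
  have wpos : ∀ t, 0 < t → 0 < w t := fun t ht => by linarith [inn t ht]
  have Hnn : ∀ t, 0 < t → 0 ≤ Hf θ μ δ (v t, w t) := by
    intro t ht
    by_contra hlt
    push Not at hlt
    apply hB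
    refine ⟨t, ht.le, hlt, fun s hs => ?_⟩
    rcases hs.1.eq_or_lt with h0 | h0
    · rw [← h0, h.v0, h.w0]; linarith
    · exact (inn s h0).2
  have sfact : ∀ t, 0 < t → 0 ≤ w t ^ 2 - μ * v t ^ 2 ∧ w t ^ 2 - μ * v t ^ 2 ≤ w t ^ 2 ∧
      w t ^ 2 ≤ 1 ∧ (w t ^ 2 - μ * v t ^ 2) ^ θ ≤ 1 ∧
      1 / 2 ≤ 1 - μ * δ - μ * (w t ^ 2 - μ * v t ^ 2) ^ θ := by
    intro t ht
    have hw := wpos t ht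
    have hw1 := w1 t ht.le
    obtain ⟨-, e1, e2⟩ := Nf_eq (θ := θ) (δ := δ) (inn t ht).1.le (inn t ht).2.le hw1 hμ hμ'
    have g0 : 0 ≤ w t ^ 2 - μ * v t ^ 2 := by nlinarith [sq_nonneg (w t)]
    have g1 : w t ^ 2 ≤ 1 := by nlinarith
    have g2 := Real.rpow_le_one g0 (e2.trans g1) (by linarith : 0 ≤ θ)
    exact ⟨g0, e2, g1, g2, by nlinarith⟩
  have dv : ∀ t, 0 < t → HasDerivAt v (((w t ^ 2 - μ * v t ^ 2) ^ θ - δ) * w t - 2 / t * v t) t := by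
    intro t ht
    have := h.dv t ht
    rwa [(Nf_eq (θ := θ) (δ := δ) (inn t ht).1.le (inn t ht).2.le (w1 t ht.le) hμ hμ').1] at this
  have dw : ∀ t, 0 < t → HasDerivAt w
      (-((1 - μ * δ - μ * (w t ^ 2 - μ * v t ^ 2) ^ θ) * v t)) t := by
    intro t ht
    have := h.dw t ht
    rwa [(Nf_eq (θ := θ) (δ := δ) (inn t ht).1.le (inn t ht).2.le (w1 t ht.le) hμ hμ').1] at this
  obtain ⟨T, hT1, hT⟩ : ∃ T, 1 ≤ T ∧ (w T ^ 2) ^ θ ≤ 3 / 2 * δ := by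
    by_contra hcon
    push Not at hcon
    have hTT : 1 ≤ 1 + 40 / δ ^ 2 := by
      have : 0 < 40 / δ ^ 2 := by positivity
      linarith
    have := le_of_deriv_nonneg (f := fun t => v t - 6 * w t - δ ^ 2 / 2 * t)
      (f' := fun t => (((w t ^ 2 - μ * v t ^ 2) ^ θ - δ) * w t - 2 / t * v t) -
        6 * (-((1 - μ * δ - μ * (w t ^ 2 - μ * v t ^ 2) ^ θ) * v t)) - δ ^ 2 / 2)
      hTT (by fun_prop)
      (fun t ht => by
        have ht0 : 0 < t := by linarith [ht.1]
        refine (((dv t ht0).sub ((dw t ht0).const_mul 6)).sub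
          ((hasDerivAt_id t).const_mul (δ ^ 2 / 2))).congr_deriv ?_
        simp)
      (fun t ht => by
        have ht0 : 0 < t := by linarith [ht.1]
        obtain ⟨g0, g1, g2, g3, g4⟩ := sfact t ht0
        obtain ⟨b1, b2⟩ := inn t ht0
        have hw := wpos t ht0
        have hw1 := w1 t ht0.le
        have hc := hcon t ht.1.le
        have lip := rpow_lip h1 h2 (x := w t ^ 2) (y := w t ^ 2 - μ * v t ^ 2)
          ⟨sq_nonneg _, g2⟩ ⟨g0, g1.trans g2⟩
        rw [sub_sub_cancel, abs_of_nonneg (by positivity : 0 ≤ μ * v t ^ 2)] at lip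
        have lip2 := (le_abs_self _).trans lip
        have q1 : 2 * (μ * v t ^ 2) ≤ v t := by
          have : μ * v t ≤ 1 / 2 := by nlinarith
          nlinarith
        have q2 : δ ≤ w t := by
          have : (w t ^ 2) ^ θ ≤ (w t ^ 2) ^ (1:ℝ) :=
            Real.rpow_le_rpow_of_exponent_ge (by positivity) g2 h1
          rw [Real.rpow_one] at this
          nlinarith
        have q3 : δ / 2 - v t ≤ (w t ^ 2 - μ * v t ^ 2) ^ θ - δ := by linarith
        have q4 : (δ / 2 - v t) * w t ≤ ((w t ^ 2 - μ * v t ^ 2) ^ θ - δ) * w t := by gcongr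
        have q5 : 2 / t * v t ≤ 2 * v t := by
          gcongr; rw [div_le_iff₀ ht0]; linarith [ht.1]
        have q6 : 1 / 2 * v t ≤ (1 - μ * δ - μ * (w t ^ 2 - μ * v t ^ 2) ^ θ) * v t := by gcongr
        nlinarith)
    simp only [mul_add, mul_one] at this
    have e : δ ^ 2 / 2 * (40 / δ ^ 2) = 20 := by field_simp; norm_num
    rw [e] at this
    have i1 := inn 1 one_pos
    have i2 := inn (1 + 40 / δ ^ 2) (by positivity)
    have i3 := w1 1 zero_le_one
    have i4 := w1 (1 + 40 / δ ^ 2) (by positivity)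
    linarith
  have hT0 : 0 < T := by linarith
  have hvlow : ∀ t, T ≤ t → δ / 2 * w t ≤ v t := by
    intro t ht
    have ht0 : 0 < t := by linarith
    have hw := wpos t ht0
    obtain ⟨g0, g1, g2, g3, g4⟩ := sfact t ht0
    obtain ⟨b1, b2⟩ := inn t ht0
    have hH := Hnn t ht0
    simp only [Hf, max_eq_left g0] at hH
    have wt : (w t ^ 2) ^ θ ≤ 3 / 2 * δ := by
      refine le_trans ?_ hT
      have := wanti T t hT0.le ht
      gcongr
    have p1 : (w t ^ 2 - μ * v t ^ 2) ^ (θ + 1) ≤ 3 / 2 * δ * w t ^ 2 := by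
      calc _ ≤ (w t ^ 2) ^ (θ + 1) := by gcongr
        _ = (w t ^ 2) ^ θ * w t ^ 2 := by rw [Real.rpow_add (by positivity), Real.rpow_one]
        _ ≤ _ := by gcongr
    have p2 : (w t ^ 2 - μ * v t ^ 2) ^ (θ + 1) / (2 * (θ + 1)) ≤ 3 / 2 * δ * w t ^ 2 / 4 := by
      gcongr; linarith
    have p3 : (1 - μ * δ) * v t ^ 2 ≤ v t ^ 2 := by
      have : 0 ≤ μ * δ := by positivity
      nlinarith [sq_nonneg (v t)]
    have p4 : δ * w t ^ 2 / 4 ≤ v t ^ 2 := by linarith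
    have p5 : (δ / 2 * w t) ^ 2 ≤ v t ^ 2 := by
      have : δ ^ 2 ≤ δ := by nlinarith
      have : δ ^ 2 * w t ^ 2 ≤ δ * w t ^ 2 := by gcongr
      nlinarith
    exact (pow_le_pow_iff_left₀ (by positivity) b1.le (by norm_num)).1 p5
  have hexp : ∀ t, T ≤ t → Real.exp (δ / 4 * t) * w t ≤ Real.exp (δ / 4 * T) * w T := by
    intro t ht
    have := le_of_deriv_nonneg (f := fun s => - (Real.exp (δ / 4 * s) * w s))
      (f' := fun s => Real.exp (δ / 4 * s) *
        ((1 - μ * δ - μ * (w s ^ 2 - μ * v s ^ 2) ^ θ) * v s - δ / 4 * w s)) ht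
      (by fun_prop)
      (fun s hs => by
        have hs0 : 0 < s := by linarith [hs.1]
        have e := (exp_mul_deriv (δ / 4) (dw s hs0)).neg
        refine e.congr_deriv ?_
        ring)
      (fun s hs => by
        have hs0 : 0 < s := by linarith [hs.1]
        obtain ⟨g0, g1, g2, g3, g4⟩ := sfact s hs0
        obtain ⟨b1, b2⟩ := inn s hs0
        have := hvlow s hs.1.le
        have q6 : 1 / 2 * v s ≤ (1 - μ * δ - μ * (w s ^ 2 - μ * v s ^ 2) ^ θ) * v s := by gcongr
        apply mul_nonneg (Real.exp_pos _).le
        linarith)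
    linarith
  refine ⟨Real.exp (δ / 4 * T), Real.exp_pos _, δ / 4, by positivity, fun t ht => ?_⟩
  rcases le_total T t with htT | htT
  · have e1 := hexp t htT
    have e2 : Real.exp (δ / 4 * T) * w T ≤ Real.exp (δ / 4 * T) := by
      have := w1 T hT0.le
      have := Real.exp_pos (δ / 4 * T)
      nlinarith
    rw [neg_mul, Real.exp_neg, ← div_eq_mul_inv, le_div_iff₀ (Real.exp_pos _)]
    linarith
  · rw [← Real.exp_add]
    refine (w1 t ht).trans (Real.one_le_exp ?_)
    nlinarith

lemma persist {Y : Type*} [PseudoMetricSpace Y] {γ : ℝ → Y} (hγ : Continuous γ) {U W : Set Y}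
    (hU : IsOpen U) (hW : IsOpen W) {t : ℝ} (ht : 0 ≤ t) (h : ∀ s ∈ Icc (0:ℝ) t, γ s ∈ U)
    (hw : γ t ∈ W) : ∃ ρ > 0, ∀ γ' : ℝ → Y, (∀ s ∈ Icc (0:ℝ) t, dist (γ' s) (γ s) < ρ) →
      γ' t ∈ W ∧ ∀ s ∈ Icc (0:ℝ) t, γ' s ∈ U := by
  obtain ⟨ρ, hρ, h1⟩ := tube hγ hU h
  obtain ⟨ρ', hρ', h2⟩ := Metric.isOpen_iff.1 hW _ hw
  refine ⟨min ρ ρ', lt_min hρ hρ', fun γ' h' => ⟨h2 ?_, fun s hs => h1 _ s hs ?_⟩⟩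
  · exact (h' t ⟨ht, le_rfl⟩).trans_le (min_le_right _ _)
  · exact (h' s hs).trans_le (min_le_left _ _)

lemma open_param {S : ℝ → ℝ → ℝ × ℝ} {L : ℝ} (hL : 0 < L) (hc : ∀ a, Continuous (S a))
    (hd : ∀ a a' t, 0 ≤ t → ‖S a t - S a' t‖ ≤ 2 * |a - a'| * Real.exp (L * t))
    {U W : Set (ℝ × ℝ)} (hU : IsOpen U) (hW : IsOpen W) :
    IsOpen {a | ∃ t, 0 ≤ t ∧ S a t ∈ W ∧ ∀ s ∈ Icc 0 t, S a s ∈ U} := by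
  rw [Metric.isOpen_iff]
  rintro a ⟨t, ht, hw, hu⟩
  obtain ⟨ρ, hρ, hp⟩ := persist (hc a) hU hW ht hu hw
  have he := Real.exp_pos (L * t)
  refine ⟨ρ / (2 * Real.exp (L * t)), by positivity, fun a' ha' => ⟨t, ht, hp (S a') ?_⟩⟩
  intro s hs
  rw [dist_eq_norm]
  rw [Metric.mem_ball, Real.dist_eq, lt_div_iff₀ (by positivity)] at ha'
  have h3 : Real.exp (L * s) ≤ Real.exp (L * t) :=
    Real.exp_le_exp.2 (mul_le_mul_of_nonneg_left hs.2 hL.le)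
  calc _ ≤ _ := hd a' a s hs.1
    _ ≤ 2 * |a' - a| * Real.exp (L * t) := by gcongr
    _ < ρ := by linarith

lemma H_low {θ μ δ : ℝ} (h1 : 1 ≤ θ) (hδ : 0 < δ) (hδ' : δ ≤ 1/2) : Hf θ μ δ (0, δ) < 0 := by
  by_contra h
  have := H_zero h1 hδ hδ (not_lt.1 h)
  have h2 : (δ ^ 2) ^ θ ≤ (δ ^ 2) ^ (1:ℝ) :=
    Real.rpow_le_rpow_of_exponent_ge (by positivity) (by nlinarith) h1
  rw [Real.rpow_one] at h2
  nlinarith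

lemma shoot {θ : ℝ} (h1 : 1 ≤ θ) (h2 : θ < 2) : ∃ μ > 0, μ ≤ 1/200 ∧ ∃ δ₀ > 0, δ₀ ≤ 1/2 ∧
    ∀ δ, 0 < δ → δ < δ₀ → ∃ a v w, 0 < a ∧ a ≤ 1 ∧ Sol θ μ δ a v w ∧
    (¬ ∃ t, 0 ≤ t ∧ 10 * w t < v t ∧ ∀ s ∈ Icc 0 t, 0 < Hf θ μ δ (v s, w s)) ∧
    (¬ ∃ t, 0 ≤ t ∧ Hf θ μ δ (v t, w t) < 0 ∧ ∀ s ∈ Icc 0 t, v s < 10 * w s) := by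
  obtain ⟨L, hL, sol, hs, hdep⟩ := ivp 8 10
  have mkSol : ∀ μ δ a, 0 ≤ μ → μ ≤ 1/200 → 0 ≤ δ → δ ≤ 1 →
      Sol θ μ δ a (fun t => (sol (Nf θ μ δ) a t).1) (fun t => (sol (Nf θ μ δ) a t).2) := by
    intro μ δ a q1 q2 q3 q4
    obtain ⟨c, z, d⟩ := hs (Nf θ μ δ) a (Nf_good h1 h2 q1 q2 q3 q4)
    exact ⟨c.fst, c.snd, by simp only [z], by simp only [z], fun t ht => (d t ht).1,
      fun t ht => (d t ht).2⟩
  have G0 : Good 8 10 (Nf θ 0 0) := Nf_good h1 h2 le_rfl (by norm_num) le_rfl (by norm_num)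
  obtain ⟨t1, ht1, hcr, hHp⟩ := LE h1 h2 (mkSol 0 0 1 le_rfl (by norm_num) le_rfl (by norm_num))
  have c0 := (hs (Nf θ 0 0) 1 G0).1
  have oU : IsOpen {q : (ℝ × ℝ) × (ℝ × ℝ) | 0 < Hf θ q.1.1 q.1.2 q.2} :=
    isOpen_lt continuous_const (Hf_cont h1)
  have oW : IsOpen {q : (ℝ × ℝ) × (ℝ × ℝ) | 10 * q.2.2 < q.2.1} :=
    isOpen_lt (by fun_prop) (by fun_prop)
  obtain ⟨ρ, hρ, hp⟩ := persist (γ := fun s => (((0:ℝ), (0:ℝ)), sol (Nf θ 0 0) 1 s))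
    (continuous_const.prodMk c0) oU oW ht1 hHp hcr
  have he : 0 < Real.exp (L * t1) := Real.exp_pos _
  obtain ⟨κ, hκ, hκ1, hκ2, hκ3⟩ : ∃ κ > 0, κ ≤ 1/200 ∧ κ < ρ ∧
      2 * (201 * κ) * Real.exp (L * t1) < ρ := by
    obtain ⟨c, hc, hc1⟩ : ∃ c : ℝ, 0 < c ∧ c = ρ / (1000 * Real.exp (L * t1)) :=
      ⟨_, by positivity, rfl⟩
    obtain ⟨d, hd⟩ : ∃ d : ℝ, d = 1 / 200 := ⟨_, rfl⟩
    have hd0 : 0 < d := by rw [hd]; norm_num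
    have m0 : 0 < min d (min (ρ / 2) c) := lt_min hd0 (lt_min (by linarith) hc)
    have m1 : min d (min (ρ / 2) c) ≤ d := min_le_left _ _
    have m2 : min d (min (ρ / 2) c) ≤ ρ / 2 := (min_le_right _ _).trans (min_le_left _ _)
    have m3 : min d (min (ρ / 2) c) ≤ c := (min_le_right _ _).trans (min_le_right _ _)
    generalize min d (min (ρ / 2) c) = k at m0 m1 m2 m3
    have q1 : k ≤ 1 / 200 := hd ▸ m1
    have q2 : k < ρ := by linarith
    rw [hc1, le_div_iff₀ (by positivity)] at m3
    have q3 : 2 * (201 * k) * Real.exp (L * t1) < ρ := by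
      have := mul_pos m0 he
      linarith
    exact ⟨k, m0, q1, q2, q3⟩
  refine ⟨κ, hκ, hκ1, κ, hκ, by linarith, fun δ hδ hδκ => ?_⟩
  have G : Good 8 10 (Nf θ κ δ) := Nf_good h1 h2 hκ.le hκ1 hδ.le (by linarith)
  set S : ℝ → ℝ → ℝ × ℝ := fun a t => sol (Nf θ κ δ) a t with hS
  have hc : ∀ a, Continuous (S a) := fun a => (hs _ a G).1
  have hd : ∀ a a' t, 0 ≤ t → ‖S a t - S a' t‖ ≤ 2 * |a - a'| * Real.exp (L * t) := by
    intro a a' t ht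
    have := hdep _ _ a a' 0 G G le_rfl (by simp) t ht
    rwa [add_zero] at this
  have oH : Continuous fun p : ℝ × ℝ => Hf θ κ δ p :=
    Hf_cont1 h1 κ δ
  have oA := open_param hL hc hd (U := {p | 0 < Hf θ κ δ p}) (W := {p | 10 * p.2 < p.1})
    (isOpen_lt continuous_const oH) (isOpen_lt (by fun_prop) (by fun_prop))
  have oB := open_param hL hc hd (U := {p | p.1 < 10 * p.2}) (W := {p | Hf θ κ δ p < 0})
    (isOpen_lt (by fun_prop) (by fun_prop)) (isOpen_lt oH continuous_const)
  by_contra hcon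
  have cov : Icc δ 1 ⊆ {a | ∃ t, 0 ≤ t ∧ S a t ∈ {p : ℝ × ℝ | 10 * p.2 < p.1} ∧
      ∀ s ∈ Icc 0 t, S a s ∈ {p : ℝ × ℝ | 0 < Hf θ κ δ p}} ∪
      {a | ∃ t, 0 ≤ t ∧ S a t ∈ {p : ℝ × ℝ | Hf θ κ δ p < 0} ∧
      ∀ s ∈ Icc 0 t, S a s ∈ {p : ℝ × ℝ | p.1 < 10 * p.2}} := by
    intro a ha
    by_contra hno
    rw [mem_union, not_or] at hno
    exact hcon ⟨a, _, _, hδ.trans_le ha.1, ha.2,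
      mkSol κ δ a hκ.le hκ1 hδ.le (by linarith), hno.1, hno.2⟩
  have hδ1 : δ ≤ 1 := by linarith
  have in1 : ((1:ℝ) ∈ {a | ∃ t, 0 ≤ t ∧ S a t ∈ {p : ℝ × ℝ | 10 * p.2 < p.1} ∧
      ∀ s ∈ Icc 0 t, S a s ∈ {p : ℝ × ℝ | 0 < Hf θ κ δ p}}) := by
    have hq := hp (fun s => ((κ, δ), S 1 s)) ?_
    · exact ⟨t1, ht1, hq.1, hq.2⟩
    intro s hs'
    have h3 : Real.exp (L * s) ≤ Real.exp (L * t1) :=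
      Real.exp_le_exp.2 (mul_le_mul_of_nonneg_left hs'.2 hL.le)
    have := hdep _ _ 1 1 (200 * κ + δ) G G0 (by positivity)
      (Nf_diff h1 h2 hκ.le hκ1 hδ.le hδ1) s hs'.1
    rw [sub_self, abs_zero, zero_add] at this
    have h4 : 2 * (200 * κ + δ) * Real.exp (L * s) ≤ 2 * (201 * κ) * Real.exp (L * t1) := by
      gcongr; linarith
    rw [Prod.dist_eq, Prod.dist_eq]
    refine max_lt (max_lt ?_ ?_) ?_
    · rw [Real.dist_eq, sub_zero, abs_of_pos hκ]; exact hκ2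
    · rw [Real.dist_eq, sub_zero, abs_of_pos hδ]; exact hδκ.trans hκ2
    · rw [dist_eq_norm]; exact (this.trans h4).trans_lt hκ3
  have inδ : (δ ∈ {a | ∃ t, 0 ≤ t ∧ S a t ∈ {p : ℝ × ℝ | Hf θ κ δ p < 0} ∧
      ∀ s ∈ Icc 0 t, S a s ∈ {p : ℝ × ℝ | p.1 < 10 * p.2}}) := by
    have z : S δ 0 = (0, δ) := (hs _ δ G).2.1
    have q1 : Hf θ κ δ (S δ 0) < 0 := by
      rw [z]; exact H_low h1 hδ (by linarith)
    have q2 : ∀ s ∈ Icc (0:ℝ) 0, (S δ s).1 < 10 * (S δ s).2 := by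
      intro s hs'
      have : s = 0 := le_antisymm hs'.2 hs'.1
      rw [this, z]; simp [hδ]
    have q0 : (0:ℝ) ≤ 0 := le_rfl
    exact ⟨0, q0, q1, q2⟩
  obtain ⟨a, -, ⟨t, ht, hw, hu⟩, ⟨t', ht', hw', hu'⟩⟩ :=
    isPreconnected_Icc (a := δ) (b := 1) _ _ oA oB cov ⟨1, right_mem_Icc.2 hδ1, in1⟩
      ⟨δ, left_mem_Icc.2 hδ1, inδ⟩
  rcases le_total t t' with hle | hle
  · have := hu' t ⟨ht, hle⟩
    simp only [mem_ofPred_eq] at this hw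
    linarith
  · have := hu t' ⟨ht', hle⟩
    simp only [mem_ofPred_eq] at this hw'
    linarith

lemma reg {θ e1 e2 : ℝ} {f g : ℝ → ℝ}
    (hf : ∀ r > 0, HasDerivAt f (((g r ^ 2 - f r ^ 2) ^ θ - e1) * g r - 2 / r * f r) r)
    (hg : ∀ r > 0, HasDerivAt g (((g r ^ 2 - f r ^ 2) ^ θ - e2) * f r) r)
    (hs : ∀ r > 0, 0 < g r ^ 2 - f r ^ 2) :
    ContDiffOn ℝ 2 f (Ioi 0) ∧ ContDiffOn ℝ 2 g (Ioi 0) := by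
  have step : ∀ n : ℕ, ContDiffOn ℝ n f (Ioi 0) ∧ ContDiffOn ℝ n g (Ioi 0) →
      ContDiffOn ℝ (n + 1) f (Ioi 0) ∧ ContDiffOn ℝ (n + 1) g (Ioi 0) := by
    rintro n ⟨cf, cg⟩
    have cp : ContDiffOn ℝ n (fun r => (g r ^ 2 - f r ^ 2) ^ θ) (Ioi 0) :=
      ((cg.pow 2).sub (cf.pow 2)).rpow_const_of_ne fun r hr => (hs r hr).ne'
    have ci : ContDiffOn ℝ n (fun r : ℝ => 2 / r) (Ioi 0) :=
      contDiffOn_const.div contDiffOn_id fun r hr => ne_of_gt hr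
    rw [contDiffOn_succ_iff_deriv_of_isOpen isOpen_Ioi,
      contDiffOn_succ_iff_deriv_of_isOpen isOpen_Ioi]
    refine ⟨⟨fun r hr => (hf r hr).differentiableAt.differentiableWithinAt, by simp, ?_⟩,
      ⟨fun r hr => (hg r hr).differentiableAt.differentiableWithinAt, by simp, ?_⟩⟩
    · exact (((cp.sub contDiffOn_const).mul cg).sub (ci.mul cf)).congr
        fun r hr => (hf r hr).deriv
    · exact ((cp.sub contDiffOn_const).mul cf).congr fun r hr => (hg r hr).deriv
  have c0 : ContDiffOn ℝ (0:ℕ) f (Ioi 0) ∧ ContDiffOn ℝ (0:ℕ) g (Ioi 0) := by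
    constructor
    · exact contDiffOn_zero.2 fun r hr => (hf r hr).continuousAt.continuousWithinAt
    · exact contDiffOn_zero.2 fun r hr => (hg r hr).continuousAt.continuousWithinAt
  have c1 := step 0 c0
  have c2 := step 1 (by simpa using c1)
  have e : ((1:ℕ) : WithTop ℕ∞) + 1 = 2 := by norm_num
  rwa [e] at c2

lemma main {θ : ℝ} (h1 : 1 ≤ θ) (h2 : θ < 2) :
    ∃ ε₀ > (0:ℝ), ∀ ε ∈ Ioo (0:ℝ) ε₀, ∃ f g : ℝ → ℝ,
      (∀ r > 0, HasDerivAt f (((g r ^ 2 - f r ^ 2) ^ θ - ε) * g r - 2 / r * f r) r) ∧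
      (∀ r > 0, HasDerivAt g (((g r ^ 2 - f r ^ 2) ^ θ - (1 - ε)) * f r) r) ∧
      (∀ r > 0, 0 < g r ^ 2 - f r ^ 2) ∧
      (∀ r > 0, (g r ^ 2 - f r ^ 2) ^ θ ≤ 1) ∧ 0 < ε ∧ ε ≤ 1 ∧
      ∃ K > 0, ∃ C > 0, ∃ σ > 0, ∀ r > 0, 0 < g r ∧ g r ≤ C * Real.exp (-σ * r) ∧
        0 < f r ∧ f r ≤ K * g r := by
  obtain ⟨μ, hμ, hμ', δ₀, hδ₀, hδ₀', H⟩ := shoot h1 h2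
  refine ⟨μ * δ₀, by positivity, fun ε hε => ?_⟩
  have hδ : 0 < ε / μ := div_pos hε.1 hμ
  have hδ2 : ε / μ < δ₀ := by rw [div_lt_iff₀ hμ]; linarith [hε.2]
  have hεe : μ * (ε / μ) = ε := by field_simp
  generalize ε / μ = δ at hδ hδ2 hεe
  obtain ⟨a, v, w, ha, ha1, h, hA, hB⟩ := H δ hδ hδ2
  have inn := trap h1 hμ.le hμ' hδ (by linarith) ha ha1 h hA hB
  obtain ⟨C, hC, σ, hσ, hdec⟩ := decay h1 h2 hμ.le hμ' hδ (by linarith) ha1 h hB ha inn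
  have w1 : ∀ t, 0 < t → w t ≤ 1 := fun t ht => by
    have := h.wanti h1 hμ.le hμ' hδ.le (by linarith) 0 t le_rfl ht.le
    rw [h.w0] at this; linarith
  have wpos : ∀ t, 0 < t → 0 < w t := fun t ht => by linarith [inn t ht]
  have eq := fun t (ht : 0 < t) =>
    Nf_eq (θ := θ) (δ := δ) (inn t ht).1.le (inn t ht).2.le (w1 t ht) hμ.le hμ'
  have dv : ∀ t, 0 < t →
      HasDerivAt v (((w t ^ 2 - μ * v t ^ 2) ^ θ - δ) * w t - 2 / t * v t) t := by
    intro t ht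
    have := h.dv t ht
    rwa [(eq t ht).1] at this
  have dw : ∀ t, 0 < t → HasDerivAt w
      (-((1 - μ * δ - μ * (w t ^ 2 - μ * v t ^ 2) ^ θ) * v t)) t := by
    intro t ht
    have := h.dw t ht
    rwa [(eq t ht).1] at this
  obtain ⟨x, hx, hxμ⟩ : ∃ x : ℝ, 0 < x ∧ (x ^ 2) ^ θ = μ := by
    refine ⟨μ ^ (1 / (2 * θ)), Real.rpow_pos_of_pos hμ _, ?_⟩
    rw [← Real.rpow_natCast, ← Real.rpow_mul hμ.le, ← Real.rpow_mul hμ.le]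
    have : 1 / (2 * θ) * ((2:ℕ):ℝ) * θ = 1 := by push_cast; field_simp
    rw [this, Real.rpow_one]
  obtain ⟨y, hy, hyμ⟩ : ∃ y : ℝ, 0 < y ∧ y ^ 2 = μ :=
    ⟨√μ, Real.sqrt_pos.2 hμ, Real.sq_sqrt hμ.le⟩
  have sp : ∀ t, 0 < t → 0 < w t ^ 2 - μ * v t ^ 2 := fun t ht => by
    have := pow_pos (wpos t ht) 2
    linarith [(eq t ht).2.1]
  have sr : ∀ r, (x * w (y * r)) ^ 2 - (x * y * v (y * r)) ^ 2 =
      x ^ 2 * (w (y * r) ^ 2 - μ * v (y * r) ^ 2) := fun r => by rw [← hyμ]; ring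
  have srt : ∀ r, 0 < r → ((x * w (y * r)) ^ 2 - (x * y * v (y * r)) ^ 2) ^ θ =
      μ * (w (y * r) ^ 2 - μ * v (y * r) ^ 2) ^ θ := fun r hr => by
    rw [sr, Real.mul_rpow (by positivity) (sp _ (by positivity)).le, hxμ]
  have hyd : ∀ r, HasDerivAt (fun r => y * r) y r := fun r => by
    simpa using (hasDerivAt_id r).const_mul y
  refine ⟨fun r => x * y * v (y * r), fun r => x * w (y * r), ?_, ?_, ?_, ?_, hε.1, ?_,
    10 * y, by positivity, x * C, by positivity, σ * y, by positivity, ?_⟩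
  · intro r hr
    have hyr : 0 < y * r := by positivity
    have d := ((dv _ hyr).comp r (hyd r)).const_mul (x * y)
    simp only [srt r hr]
    refine d.congr_deriv ?_
    rw [← hεe, ← hyμ]
    field_simp
  · intro r hr
    have hyr : 0 < y * r := by positivity
    have d := ((dw _ hyr).comp r (hyd r)).const_mul x
    simp only [srt r hr]
    refine d.congr_deriv ?_
    rw [← hεe]
    ring
  · intro r hr
    have := sp (y * r) (by positivity)
    simp only [sr]
    positivity
  · intro r hr
    simp only [srt r hr]
    have hyr : 0 < y * r := by positivity
    have q := sp _ hyr
    have q1 := (eq _ hyr).2.2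
    have q2 := w1 _ hyr
    have q3 := wpos _ hyr
    have : (w (y * r) ^ 2 - μ * v (y * r) ^ 2) ^ θ ≤ 1 :=
      Real.rpow_le_one q.le (by nlinarith) (by linarith)
    nlinarith
  · rw [← hεe]; nlinarith
  · intro r hr
    have hyr : 0 < y * r := by positivity
    have q3 := wpos _ hyr
    have i := inn _ hyr
    have d := hdec _ hyr.le
    have i1 := i.1
    refine ⟨by positivity, ?_, by positivity, ?_⟩
    · calc x * w (y * r) ≤ x * (C * Real.exp (-σ * (y * r))) := by gcongr
        _ = _ := by rw [show -σ * (y * r) = -(σ * y) * r by ring]; ring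
    · have : x * y * v (y * r) ≤ x * y * (10 * w (y * r)) := by
        have := i.2.le
        gcongr
      linarith

end DiracLoc

/-- Combination of Theorems 1.1 and 1.2 of the paper: for the nonlinearity `F(s) = |s|^θ`
with `1 ≤ θ < 2` and mass `m = 1/2`, there is `ε₀ > 0` such that for every
`ε ∈ (0, ε₀)` and frequency `ω = m − ε`, the radially reduced nonlinear Dirac system has a
nontrivial, twice continuously differentiable, exponentially decaying solution `(f, g)`. -/
theorem dirac_localized_solutions (θ : ℝ) (hθ₁ : 1 ≤ θ) (hθ₂ : θ < 2) :
    ∃ ε₀ > (0:ℝ), ∀ ε ∈ Set.Ioo (0:ℝ) ε₀, ∀ ω : ℝ, ω = 1/2 - ε →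
      ∃ f g : ℝ → ℝ,
        ContDiffOn ℝ 2 f (Set.Ioi 0) ∧ ContDiffOn ℝ 2 g (Set.Ioi 0) ∧
        (∃ r > (0:ℝ), f r ≠ 0 ∨ g r ≠ 0) ∧
        (∀ r > (0:ℝ),
          deriv f r + (2 / r) * f r = (|g r ^ 2 - f r ^ 2| ^ θ - (1/2 - ω)) * g r ∧
          deriv g r = (|g r ^ 2 - f r ^ 2| ^ θ - (1/2 + ω)) * f r) ∧
        ∃ C > (0:ℝ), ∃ σ > (0:ℝ), ∀ r ≥ (1:ℝ),
          |f r| + |g r| + |deriv f r| + |deriv g r| ≤ C * Real.exp (-σ * r) := by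
  obtain ⟨ε₀, hε₀, H⟩ := DiracLoc.main hθ₁ hθ₂
  refine ⟨ε₀, hε₀, fun ε hε ω hω => ?_⟩
  obtain ⟨f, g, hf, hg, hs, hs1, he0, he1, K, hK, C, hC, σ, hσ, hb⟩ := H ε hε
  obtain ⟨cf, cg⟩ := DiracLoc.reg hf hg hs
  refine ⟨f, g, cf, cg, ⟨1, one_pos, Or.inr (hb 1 one_pos).1.ne'⟩, fun r hr => ?_,
    (K + 1 + (1 + 2 * K) + K) * C, by positivity, σ, hσ, fun r hr => ?_⟩
  · rw [(hf r hr).deriv, (hg r hr).deriv, abs_of_pos (hs r hr), hω]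
    constructor <;> ring
  · have hr0 : 0 < r := by linarith
    obtain ⟨b1, b2, b3, b4⟩ := hb r hr0
    rw [(hf r hr0).deriv, (hg r hr0).deriv, abs_of_pos b1, abs_of_pos b3]
    have p0 : 0 < (g r ^ 2 - f r ^ 2) ^ θ := Real.rpow_pos_of_pos (hs r hr0) _
    have p1 := hs1 r hr0
    generalize (g r ^ 2 - f r ^ 2) ^ θ = P at p0 p1
    have a1 : |(P - ε) * g r| ≤ g r := by
      rw [abs_mul, abs_of_pos b1]
      have : |P - ε| ≤ 1 := abs_le.2 ⟨by linarith, by linarith⟩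
      nlinarith
    have a2 : |2 / r * f r| ≤ 2 * f r := by
      rw [abs_of_pos (by positivity)]
      gcongr
      rw [div_le_iff₀ hr0]; linarith
    have a3 : |(P - (1 - ε)) * f r| ≤ f r := by
      rw [abs_mul, abs_of_pos b3]
      have : |P - (1 - ε)| ≤ 1 := abs_le.2 ⟨by linarith, by linarith⟩
      nlinarith
    have a4 := abs_sub ((P - ε) * g r) (2 / r * f r)
    have a5 : (K + 1 + (1 + 2 * K) + K) * g r ≤
        (K + 1 + (1 + 2 * K) + K) * (C * Real.exp (-σ * r)) := by gcongr
    linarith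
end

section
/- Let m = 1/2 (Soler model, F(s) = s). There exists ε₀ > 0 such that for every ε ∈ (0, ε₀), setting ω = m − ε, there exist twice continuously differentiable functions f, g : (0,∞) → ℝ, not both identically zero, satisfying for all r > 0 the system f'(r) + (2/r) f(r) = ((g(r)² − f(r)²) − (m − ω)) g(r) and g'(r) = ((g(r)² − f(r)²) − (m + ω)) f(r), and constants C > 0, σ > 0 (depending on ε) such that |f(r)| + |g(r)| + |f'(r)| + |g'(r)| ≤ C e^{−σ r} for all r ≥ 1. -/
open Set Filter Topology MeasureTheory

namespace Soler

noncomputable def J (F : ℝ → ℝ × ℝ) (ρ : ℝ) : ℝ × ℝ :=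
  ρ • ∫ τ in (0:ℝ)..1, ((F (ρ * τ)).1, τ ^ 2 * (F (ρ * τ)).2)

lemma J_cont {F : ℝ → ℝ × ℝ} (hF : Continuous F) : Continuous (J F) := by
  unfold J
  refine continuous_id.smul ?_
  apply intervalIntegral.continuous_parametric_intervalIntegral_of_continuous'
  fun_prop

lemma J_sub {F G : ℝ → ℝ × ℝ} (hF : Continuous F) (hG : Continuous G) (ρ : ℝ) :
    J F ρ - J G ρ = J (fun t => F t - G t) ρ := by
  unfold J
  rw [← smul_sub, ← intervalIntegral.integral_sub]
  · congr 1
    apply intervalIntegral.integral_congr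
    intro τ _
    ext <;> simp; ring
  · apply Continuous.intervalIntegrable; fun_prop
  · apply Continuous.intervalIntegrable; fun_prop

lemma exp_int (l ρ : ℝ) (hl : 0 < l) :
    |ρ| * ∫ τ in (0:ℝ)..1, Real.exp (l * |ρ * τ|) ≤ Real.exp (l * |ρ|) / l := by
  have h1 : ∫ τ in (0:ℝ)..1, Real.exp (l * |ρ * τ|) = ∫ τ in (0:ℝ)..1, Real.exp ((l * |ρ|) * τ) := by
    apply intervalIntegral.integral_congr
    intro τ hτ
    simp only [zero_le_one, uIcc_of_le, mem_Icc] at hτ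
    simp only [abs_mul, abs_of_nonneg hτ.1]
    ring_nf
  rw [h1]
  by_cases hρ : ρ = 0
  · subst hρ; simp; positivity
  have hp : 0 < |ρ| := abs_pos.mpr hρ
  have hc : l * |ρ| ≠ 0 := by positivity
  rw [intervalIntegral.integral_comp_mul_left _ hc]
  simp only [mul_zero, mul_one, integral_exp, Real.exp_zero, smul_eq_mul]
  rw [mul_inv]
  have : |ρ| * (l⁻¹ * |ρ|⁻¹ * (Real.exp (l * |ρ|) - 1)) = (Real.exp (l * |ρ|) - 1) / l := by
    field_simp
  rw [this]
  gcongr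
  linarith

lemma J_bound {F : ℝ → ℝ × ℝ} (D l : ℝ) (hl : 0 < l)
    (h : ∀ t, ‖F t‖ ≤ D * Real.exp (l * |t|)) (ρ : ℝ) :
    ‖J F ρ‖ ≤ D / l * Real.exp (l * |ρ|) := by
  have hD : 0 ≤ D := by
    have := (norm_nonneg _).trans (h 0)
    simpa using this
  unfold J
  rw [norm_smul, Real.norm_eq_abs]
  have h2 : ‖∫ τ in (0:ℝ)..1, ((F (ρ * τ)).1, τ ^ 2 * (F (ρ * τ)).2)‖
      ≤ ∫ τ in (0:ℝ)..1, D * Real.exp (l * |ρ * τ|) := by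
    apply intervalIntegral.norm_integral_le_of_norm_le zero_le_one
    · refine Eventually.of_forall fun τ hτ => ?_
      refine le_trans ?_ (h (ρ * τ))
      rw [Prod.norm_def, Prod.norm_def]
      apply max_le_max le_rfl
      simp only [norm_mul, norm_pow, Real.norm_eq_abs, abs_of_pos hτ.1]
      have : τ ^ 2 ≤ 1 := pow_le_one₀ hτ.1.le hτ.2
      exact mul_le_of_le_one_left (abs_nonneg _) this
    · apply Continuous.intervalIntegrable; fun_prop
  rw [intervalIntegral.integral_const_mul] at h2
  calc _ ≤ |ρ| * (D * ∫ τ in (0:ℝ)..1, Real.exp (l * |ρ * τ|)) := by gcongr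
    _ = D * (|ρ| * ∫ τ in (0:ℝ)..1, Real.exp (l * |ρ * τ|)) := by ring
    _ ≤ D * (Real.exp (l * |ρ|) / l) := by gcongr; exact exp_int l ρ hl
    _ = _ := by ring

lemma J_fst {F : ℝ → ℝ × ℝ} (hF : Continuous F) (ρ : ℝ) :
    (J F ρ).1 = ∫ t in (0:ℝ)..ρ, (F t).1 := by
  unfold J
  have := (ContinuousLinearMap.fst ℝ ℝ ℝ).intervalIntegral_comp_comm (μ := volume)
    (a := 0) (b := 1) (f := fun τ => ((F (ρ * τ)).1, τ ^ 2 * (F (ρ * τ)).2))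
    (by apply Continuous.intervalIntegrable; fun_prop)
  simp only [ContinuousLinearMap.coe_fst'] at this
  simp only [Prod.smul_fst, ← this, smul_eq_mul]
  rw [← smul_eq_mul, intervalIntegral.smul_integral_comp_mul_left (fun t => (F t).1)]
  simp

lemma J_snd {F : ℝ → ℝ × ℝ} (hF : Continuous F) (ρ : ℝ) :
    ρ ^ 2 * (J F ρ).2 = ∫ t in (0:ℝ)..ρ, t ^ 2 * (F t).2 := by
  unfold J
  have := (ContinuousLinearMap.snd ℝ ℝ ℝ).intervalIntegral_comp_comm (μ := volume)
    (a := 0) (b := 1) (f := fun τ => ((F (ρ * τ)).1, τ ^ 2 * (F (ρ * τ)).2))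
    (by apply Continuous.intervalIntegrable; fun_prop)
  simp only [ContinuousLinearMap.coe_snd'] at this
  simp only [Prod.smul_snd, ← this, smul_eq_mul]
  have h3 := intervalIntegral.smul_integral_comp_mul_left (a := 0) (b := 1)
    (fun t => t ^ 2 * (F t).2) ρ
  simp only [mul_zero, mul_one, smul_eq_mul] at h3
  rw [← h3, mul_left_comm, ← intervalIntegral.integral_const_mul]
  congr 1
  apply intervalIntegral.integral_congr
  intro τ _
  simp only; ring

lemma flow (N : (ℝ × ℝ) × (ℝ × ℝ) → ℝ × ℝ) (K : NNReal) (hN : LipschitzWith K N) (M : ℝ)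
    (hM : ∀ z, ‖N z‖ ≤ M) :
    ∃ (u : ℝ × ℝ → ℝ → ℝ × ℝ) (l : ℝ), (∀ p, Continuous (u p)) ∧ (∀ p, u p 0 = (1, 0)) ∧
      (∀ p, ∀ ρ > 0, HasDerivAt (fun r => (u p r).1) (N (p, u p ρ)).1 ρ) ∧
      (∀ p, ∀ ρ > 0, HasDerivAt (fun r => (u p r).2)
        (-(2 / ρ) * (u p ρ).2 + (N (p, u p ρ)).2) ρ) ∧
      (∀ p q ρ, ‖u p ρ - u q ρ‖ ≤ Real.exp (l * |ρ|) * ‖p - q‖) := by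
  have hM0 : 0 ≤ M := (norm_nonneg _).trans (hM 0)
  have hNc : Continuous N := hN.continuous
  set l : ℝ := 2 * K + 1 with hl
  have hlpos : 0 < l := by positivity
  have lip : ∀ a b, ‖N a - N b‖ ≤ K * ‖a - b‖ := fun a b => by
    have := hN.dist_le_mul a b
    rwa [dist_eq_norm, dist_eq_norm] at this
  let Us : BoundedContinuousFunction ℝ (ℝ × ℝ) → ℝ → ℝ × ℝ := fun Y t => Real.exp (l * |t|) • Y t
  have hUs : ∀ Y, Continuous (Us Y) := fun Y => by
    have := Y.continuous
    simp only [Us]; fun_prop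
  have hNU : ∀ p Y, Continuous (fun t => N (p, Us Y t)) := fun p Y => by
    have := hUs Y
    fun_prop
  have hee : ∀ ρ : ℝ, Real.exp (-(l * |ρ|)) * Real.exp (l * |ρ|) = 1 := fun ρ => by
    rw [← Real.exp_add]; simp
  let Φ : ℝ × ℝ → BoundedContinuousFunction ℝ (ℝ × ℝ) → BoundedContinuousFunction ℝ (ℝ × ℝ) :=
    fun p Y => BoundedContinuousFunction.ofNormedAddCommGroup
      (fun ρ => Real.exp (-(l * |ρ|)) • ((1, 0) + J (fun t => N (p, Us Y t)) ρ))
      (by have := J_cont (hNU p Y); fun_prop) (1 + M / l) (by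
        intro ρ
        have h1 := J_bound (F := fun t => N (p, Us Y t)) M l hlpos (fun t => by
          refine (hM _).trans ?_
          refine le_mul_of_one_le_right hM0 ?_
          apply Real.one_le_exp; positivity) ρ
        rw [norm_smul, Real.norm_eq_abs, abs_of_pos (Real.exp_pos _)]
        have h2 : ‖((1:ℝ), (0:ℝ))‖ = 1 := by simp [Prod.norm_def]
        have h3 : (1:ℝ) ≤ Real.exp (l * |ρ|) := by apply Real.one_le_exp; positivity
        calc _ ≤ Real.exp (-(l * |ρ|)) * (Real.exp (l * |ρ|) + M / l * Real.exp (l * |ρ|)) := by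
              gcongr
              refine (norm_add_le _ _).trans ?_
              rw [h2]; gcongr
          _ = (1 + M / l) * (Real.exp (-(l * |ρ|)) * Real.exp (l * |ρ|)) := by ring
          _ = _ := by rw [hee, mul_one])
  have hΦ : ∀ p Y ρ, Φ p Y ρ = Real.exp (-(l * |ρ|)) • ((1, 0) + J (fun t => N (p, Us Y t)) ρ) :=
    fun p Y ρ => rfl
  have hdist : ∀ p q Y Z, dist (Φ p Y) (Φ q Z) ≤ K / l * max ‖p - q‖ (dist Y Z) := by
    intro p q Y Z
    rw [BoundedContinuousFunction.dist_le (by positivity)]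
    intro ρ
    rw [dist_eq_norm, hΦ, hΦ, ← smul_sub, add_sub_add_left_eq_sub, J_sub (hNU _ _) (hNU _ _),
      norm_smul, Real.norm_eq_abs, abs_of_pos (Real.exp_pos _)]
    have h1 := J_bound (F := fun t => N (p, Us Y t) - N (q, Us Z t))
      (K * max ‖p - q‖ (dist Y Z)) l hlpos (fun t => by
        refine (lip _ _).trans ?_
        rw [mul_assoc]
        gcongr
        have h3 : (1:ℝ) ≤ Real.exp (l * |t|) := by apply Real.one_le_exp; positivity
        rw [Prod.norm_def]
        apply max_le
        · simp only [Prod.fst_sub]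
          exact (le_max_left _ _).trans (le_mul_of_one_le_right (by positivity) h3)
        · simp only [Prod.snd_sub, Us]
          rw [← smul_sub, norm_smul, Real.norm_eq_abs, abs_of_pos (Real.exp_pos _), mul_comm]
          gcongr
          refine le_trans ?_ (le_max_right _ _)
          rw [← dist_eq_norm]
          exact BoundedContinuousFunction.dist_coe_le_dist t) ρ
    calc _ ≤ Real.exp (-(l * |ρ|)) * (K * max ‖p - q‖ (dist Y Z) / l * Real.exp (l * |ρ|)) := by
          gcongr
      _ = (K / l * max ‖p - q‖ (dist Y Z)) * (Real.exp (-(l * |ρ|)) * Real.exp (l * |ρ|)) := by ring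
      _ = _ := by rw [hee, mul_one]
  have hKl : (K:ℝ) / l ≤ 1 / 2 := by
    rw [div_le_iff₀ hlpos]; rw [hl]; linarith
  have hcon : ∀ p, ContractingWith (1/2) (Φ p) := fun p => by
    refine ⟨by rw [← NNReal.coe_lt_coe]; norm_num, LipschitzWith.of_dist_le_mul fun Y Z => ?_⟩
    refine (hdist p p Y Z).trans ?_
    simp only [sub_self, norm_zero]
    rw [max_eq_right dist_nonneg]
    push_cast
    gcongr
  let Y : ℝ × ℝ → BoundedContinuousFunction ℝ (ℝ × ℝ) := fun p => ContractingWith.fixedPoint (Φ p) (hcon p)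
  have hY : ∀ p, Φ p (Y p) = Y p := fun p => (hcon p).fixedPoint_isFixedPt
  have hYd : ∀ p q, dist (Y p) (Y q) ≤ ‖p - q‖ := fun p q => by
    have := (hcon p).fixedPoint_lipschitz_in_map (hcon q) (C := 1/2 * ‖p - q‖) (fun z => by
      refine (hdist p q z z).trans ?_
      rw [dist_self, max_eq_left (norm_nonneg _)]
      gcongr)
    refine this.trans (le_of_eq ?_)
    push_cast; ring
  have hfix : ∀ p ρ, Us (Y p) ρ = (1, 0) + J (fun t => N (p, Us (Y p) t)) ρ := fun p ρ => by
    have h1 := hΦ p (Y p) ρ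
    rw [hY] at h1
    simp only [Us] at h1 ⊢
    rw [h1, smul_smul, mul_comm, hee, one_smul]
  refine ⟨fun p => Us (Y p), l, fun p => hUs _, fun p => ?_, fun p ρ hρ => ?_, fun p ρ hρ => ?_,
    fun p q ρ => ?_⟩
  · show Us (Y p) 0 = _
    rw [hfix]; simp [J]
  · have h1 : (fun r => (Us (Y p) r).1) = fun r => 1 + ∫ t in (0:ℝ)..r, (N (p, Us (Y p) t)).1 := by
      funext r
      rw [hfix, Prod.fst_add, J_fst (hNU _ _)]
    rw [h1]
    have hc : Continuous (fun t => (N (p, Us (Y p) t)).1) := (hNU p (Y p)).fst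
    exact (intervalIntegral.integral_hasDerivAt_right (hc.intervalIntegrable _ _)
      (hc.stronglyMeasurableAtFilter _ _) hc.continuousAt).const_add 1
  · have h0 : ∀ r, r ^ 2 * (Us (Y p) r).2 = ∫ t in (0:ℝ)..r, t ^ 2 * (N (p, Us (Y p) t)).2 := by
      intro r
      rw [← J_snd (hNU _ _), hfix, Prod.snd_add]
      simp
    have hc : Continuous (fun t => t ^ 2 * (N (p, Us (Y p) t)).2) :=
      (continuous_id.pow 2).mul (hNU p (Y p)).snd
    have h2 := (intervalIntegral.integral_hasDerivAt_right (hc.intervalIntegrable 0 ρ)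
      (hc.stronglyMeasurableAtFilter _ _) hc.continuousAt)
    have h3 := h2.mul ((hasDerivAt_pow 2 ρ).inv (by positivity))
    have h4 : (fun r => (Us (Y p) r).2) =ᶠ[𝓝 ρ]
        ((fun r => ∫ t in (0:ℝ)..r, t ^ 2 * (N (p, Us (Y p) t)).2) * (fun r : ℝ => r ^ 2)⁻¹) := by
      filter_upwards [lt_mem_nhds hρ] with r hr
      simp only [Pi.mul_apply, Pi.inv_apply]
      rw [← h0]
      have : r ≠ 0 := ne_of_gt hr
      field_simp
    refine (h3.congr_of_eventuallyEq h4).congr_deriv ?_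
    rw [← h0 ρ]
    simp only [Pi.inv_apply]
    field_simp
    push_cast
    ring
  · simp only [Us]
    rw [← smul_sub, norm_smul, Real.norm_eq_abs, abs_of_pos (Real.exp_pos _)]
    gcongr
    refine le_trans ?_ (hYd p q)
    rw [← dist_eq_norm]
    exact BoundedContinuousFunction.dist_coe_le_dist ρ

lemma le_of_deriv_nonpos {f f' : ℝ → ℝ} {a b : ℝ} (hab : a ≤ b) (hc : ContinuousOn f (Icc a b))
    (hd : ∀ x ∈ Ioo a b, HasDerivAt f (f' x) x) (hn : ∀ x ∈ Ioo a b, f' x ≤ 0) : f b ≤ f a := by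
  have := antitoneOn_of_deriv_nonpos (convex_Icc a b) hc
    (fun x hx => by
      rw [interior_Icc] at hx
      exact (hd x hx).differentiableAt.differentiableWithinAt)
    (fun x hx => by
      rw [interior_Icc] at hx
      rw [(hd x hx).deriv]; exact hn x hx)
  exact this (left_mem_Icc.2 hab) (right_mem_Icc.2 hab) hab

lemma le_of_deriv_nonneg {f f' : ℝ → ℝ} {a b : ℝ} (hab : a ≤ b) (hc : ContinuousOn f (Icc a b))
    (hd : ∀ x ∈ Ioo a b, HasDerivAt f (f' x) x) (hn : ∀ x ∈ Ioo a b, 0 ≤ f' x) : f a ≤ f b := by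
  have := le_of_deriv_nonpos (f := fun x => - f x) (f' := fun x => - f' x) hab hc.neg
    (fun x hx => (hd x hx).neg) (fun x hx => by have := hn x hx; linarith)
  linarith

structure Sol (μ ν : ℝ) (v w : ℝ → ℝ) : Prop where
  cv : Continuous v
  cw : Continuous w
  v0 : v 0 = 1
  w0 : w 0 = 0
  dv : ∀ ρ > 0, HasDerivAt v ((μ * (v ρ ^ 2 - μ * w ρ ^ 2) - (1 - μ * ν)) * w ρ) ρ
  dw : ∀ ρ > 0, HasDerivAt w (-(2 / ρ) * w ρ + (v ρ ^ 2 - μ * w ρ ^ 2 - ν) * v ρ) ρ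
  bv : ∀ ρ ≥ 0, v ρ ^ 2 ≤ 2
  bw : ∀ ρ ≥ 0, w ρ ^ 2 ≤ 1

/-- energy -/
noncomputable def En (μ ν x y : ℝ) : ℝ :=
  (x ^ 2 - μ * y ^ 2) ^ 2 / 4 - ν * (x ^ 2 - μ * y ^ 2) / 2 + (1 / 2 - μ * ν) * y ^ 2

lemma En_deriv {μ ν : ℝ} {v w : ℝ → ℝ} {ρ : ℝ} (hρ : 0 < ρ)
    (dv : HasDerivAt v ((μ * (v ρ ^ 2 - μ * w ρ ^ 2) - (1 - μ * ν)) * w ρ) ρ)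
    (dw : HasDerivAt w (-(2 / ρ) * w ρ + (v ρ ^ 2 - μ * w ρ ^ 2 - ν) * v ρ) ρ) :
    HasDerivAt (fun r => En μ ν (v r) (w r))
      (2 / ρ * w ρ ^ 2 * (μ * (v ρ ^ 2 - μ * w ρ ^ 2) - (1 - μ * ν))) ρ := by
  have hS := (dv.pow 2).sub ((dw.pow 2).const_mul μ)
  have h := (((hS.pow 2).div_const 4).sub ((hS.const_mul ν).div_const 2)).add
    ((dw.pow 2).const_mul (1 / 2 - μ * ν))
  refine (h.congr_of_eventuallyEq (Eventually.of_forall fun r => ?_)).congr_deriv ?_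
  · simp [En]
  · simp only [Pi.sub_apply, Pi.pow_apply]
    field_simp
    push_cast
    ring

lemma En_deriv_nonpos {μ ν x y ρ : ℝ} (hρ : 0 < ρ) (hμ : μ ∈ Icc (0:ℝ) (1/8)) (hν : ν ∈ Icc (0:ℝ) 1)
    (hx : x ^ 2 ≤ 4) : 2 / ρ * y ^ 2 * (μ * (x ^ 2 - μ * y ^ 2) - (1 - μ * ν)) ≤ 0 := by
  obtain ⟨h1, h2⟩ := hμ
  obtain ⟨h3, h4⟩ := hν
  apply mul_nonpos_of_nonneg_of_nonpos (by positivity)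
  have e1 : μ * x ^ 2 ≤ 1/8 * 4 := by gcongr
  have e2 : 0 ≤ μ * (μ * y ^ 2) := by positivity
  have e3 : μ * ν ≤ 1/8 * 1 := by gcongr
  nlinarith

lemma En_bound {μ ν x y : ℝ} (hμ : μ ∈ Icc (0:ℝ) (1/8)) (hν : ν ∈ Icc (0:ℝ) 1)
    (h : En μ ν x y ≤ En μ ν 1 0) : x ^ 2 ≤ 2 ∧ y ^ 2 ≤ 1 := by
  obtain ⟨h1, h2⟩ := hμ
  obtain ⟨h3, h4⟩ := hν
  unfold En at h
  have e3 : μ * ν ≤ 1/8 * 1 := by gcongr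
  set S := x ^ 2 - μ * y ^ 2 with hS
  have h5 : (S - ν) ^ 2 / 4 + (1 / 2 - μ * ν) * y ^ 2 ≤ (1 - ν) ^ 2 / 4 := by nlinarith
  have h6 : 3 / 8 * y ^ 2 ≤ (1 / 2 - μ * ν) * y ^ 2 := by gcongr; linarith
  have h7 : (1 - ν) ^ 2 ≤ 1 := by nlinarith
  have hy : y ^ 2 ≤ 1 := by nlinarith [sq_nonneg (S - ν)]
  have h8 : (S - ν) ^ 2 ≤ (1 - ν) ^ 2 := by nlinarith [sq_nonneg y]
  have h9 : S - ν ≤ 1 - ν := (abs_le.mp (abs_le_of_sq_le_sq h8 (by linarith))).2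
  have h10 : μ * y ^ 2 ≤ 1 / 8 * 1 := by gcongr
  exact ⟨by linarith, hy⟩

def cl (a b x : ℝ) : ℝ := max a (min b x)

lemma cl_of_mem {a b x : ℝ} (h : x ∈ Icc a b) : cl a b x = x := by
  unfold cl; rw [min_eq_right h.2, max_eq_right h.1]

lemma cl_mem {a b : ℝ} (h : a ≤ b) (x : ℝ) : cl a b x ∈ Icc a b := by
  unfold cl; exact ⟨le_max_left _ _, max_le h (min_le_left _ _)⟩

lemma cl_lip (a b : ℝ) : LipschitzWith 1 (cl a b) :=
  (LipschitzWith.id.const_min b).const_max a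

def Npoly (z : (ℝ × ℝ) × (ℝ × ℝ)) : ℝ × ℝ :=
  ((z.1.1 * (z.2.1 ^ 2 - z.1.1 * z.2.2 ^ 2) - (1 - z.1.1 * z.1.2)) * z.2.2,
    (z.2.1 ^ 2 - z.1.1 * z.2.2 ^ 2 - z.1.2) * z.2.1)

noncomputable def clz (z : (ℝ × ℝ) × (ℝ × ℝ)) : (ℝ × ℝ) × (ℝ × ℝ) :=
  ((cl 0 (1/8) z.1.1, cl 0 1 z.1.2), (cl (-2) 2 z.2.1, cl (-2) 2 z.2.2))

lemma clz_lip : LipschitzWith 1 clz := by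
  have h (a b : ℝ) {f : (ℝ × ℝ) × (ℝ × ℝ) → ℝ} (hf : LipschitzWith 1 f) :
      LipschitzWith 1 (fun z => cl a b (f z)) := by
    simpa using! (cl_lip a b).comp hf
  have a1 : LipschitzWith 1 (fun z : (ℝ × ℝ) × (ℝ × ℝ) => z.1.1) := by
    simpa using! LipschitzWith.prod_fst.comp LipschitzWith.prod_fst
  have a2 : LipschitzWith 1 (fun z : (ℝ × ℝ) × (ℝ × ℝ) => z.1.2) := by
    simpa using! LipschitzWith.prod_snd.comp LipschitzWith.prod_fst
  have a3 : LipschitzWith 1 (fun z : (ℝ × ℝ) × (ℝ × ℝ) => z.2.1) := by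
    simpa using! LipschitzWith.prod_fst.comp LipschitzWith.prod_snd
  have a4 : LipschitzWith 1 (fun z : (ℝ × ℝ) × (ℝ × ℝ) => z.2.2) := by
    simpa using! LipschitzWith.prod_snd.comp LipschitzWith.prod_snd
  have := ((h 0 (1/8) a1).prodMk (h 0 1 a2)).prodMk ((h (-2) 2 a3).prodMk (h (-2) 2 a4))
  simp only [max_self] at this
  exact this

lemma family : ∃ (v w : ℝ × ℝ → ℝ → ℝ) (l : ℝ),
    (∀ μ ∈ Icc (0:ℝ) (1/8), ∀ ν ∈ Icc (0:ℝ) 1, Sol μ ν (v (μ, ν)) (w (μ, ν))) ∧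
    (∀ p, Continuous (v p)) ∧
    (∀ p q ρ, |v p ρ - v q ρ| ≤ Real.exp (l * |ρ|) * ‖p - q‖) ∧
    (∀ p q ρ, |w p ρ - w q ρ| ≤ Real.exp (l * |ρ|) * ‖p - q‖) := by
  let B : Set ((ℝ × ℝ) × (ℝ × ℝ)) :=
    (Icc 0 (1/8) ×ˢ Icc 0 1) ×ˢ (Icc (-2) 2 ×ˢ Icc (-2) 2)
  have hBc : IsCompact B := (isCompact_Icc.prod isCompact_Icc).prod (isCompact_Icc.prod isCompact_Icc)
  have hBv : Convex ℝ B := ((convex_Icc _ _).prod (convex_Icc _ _)).prod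
    ((convex_Icc _ _).prod (convex_Icc _ _))
  have hcd : ContDiff ℝ 1 Npoly := by unfold Npoly; fun_prop
  obtain ⟨K, hK⟩ := hcd.contDiffOn.exists_lipschitzOnWith one_ne_zero hBv hBc
  have hcB : ∀ z, clz z ∈ B := fun z =>
    ⟨⟨cl_mem (by norm_num) _, cl_mem (by norm_num) _⟩,
      ⟨cl_mem (by norm_num) _, cl_mem (by norm_num) _⟩⟩
  obtain ⟨M, hM⟩ := hBc.exists_bound_of_continuousOn hcd.continuous.continuousOn
  have hlip : LipschitzWith K (fun z => Npoly (clz z)) := by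
    have := hK.comp (clz_lip.lipschitzOnWith (s := univ)) (fun z _ => hcB z)
    rw [mul_one] at this
    exact lipschitzOnWith_univ.mp this
  obtain ⟨u, l, hc, h0, h1, h2, h3⟩ := flow _ K hlip M (fun z => hM _ (hcB z))
  refine ⟨fun p ρ => (u p ρ).1, fun p ρ => (u p ρ).2, l, ?_, fun p => (hc p).fst,
    fun p q ρ => (norm_fst_le (u p ρ - u q ρ)).trans (h3 p q ρ),
    fun p q ρ => (norm_snd_le (u p ρ - u q ρ)).trans (h3 p q ρ)⟩
  intro μ hμ ν hν
  set v := fun ρ => (u (μ, ν) ρ).1 with hv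
  set w := fun ρ => (u (μ, ν) ρ).2 with hw
  have cv : Continuous v := (hc _).fst
  have cw : Continuous w := (hc _).snd
  have v0 : v 0 = 1 := by simp [hv, h0]
  have w0 : w 0 = 0 := by simp [hw, h0]
  have key : ∀ ρ, v ρ ^ 2 ≤ 4 → w ρ ^ 2 ≤ 4 → clz ((μ, ν), u (μ, ν) ρ) = ((μ, ν), u (μ, ν) ρ) := by
    intro ρ a b
    have a' : (u (μ, ν) ρ).1 ∈ Icc (-2:ℝ) 2 := abs_le.mp (abs_le_of_sq_le_sq (by simpa using by linarith) (by norm_num))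
    have b' : (u (μ, ν) ρ).2 ∈ Icc (-2:ℝ) 2 := abs_le.mp (abs_le_of_sq_le_sq (by simpa using by linarith) (by norm_num))
    unfold clz
    simp only [cl_of_mem hμ, cl_of_mem hν, cl_of_mem a', cl_of_mem b']
  have dv : ∀ ρ > 0, v ρ ^ 2 ≤ 4 → w ρ ^ 2 ≤ 4 →
      HasDerivAt v ((μ * (v ρ ^ 2 - μ * w ρ ^ 2) - (1 - μ * ν)) * w ρ) ρ := by
    intro ρ hρ a b
    have := h1 (μ, ν) ρ hρ
    rw [key ρ a b] at this
    exact this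
  have dw : ∀ ρ > 0, v ρ ^ 2 ≤ 4 → w ρ ^ 2 ≤ 4 →
      HasDerivAt w (-(2 / ρ) * w ρ + (v ρ ^ 2 - μ * w ρ ^ 2 - ν) * v ρ) ρ := by
    intro ρ hρ a b
    have := h2 (μ, ν) ρ hρ
    rw [key ρ a b] at this
    exact this
  have step : ∀ τ ≥ 0, (∀ t ∈ Ico 0 τ, v t ^ 2 ≤ 4 ∧ w t ^ 2 ≤ 4) → v τ ^ 2 ≤ 2 ∧ w τ ^ 2 ≤ 1 := by
    intro τ hτ ht
    apply En_bound hμ hν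
    have e : En μ ν 1 0 = En μ ν (v 0) (w 0) := by rw [v0, w0]
    rw [e]
    refine le_of_deriv_nonpos (f := fun r => En μ ν (v r) (w r)) hτ ?_
      (fun x hx => En_deriv hx.1 (dv x hx.1 (ht x ⟨hx.1.le, hx.2⟩).1 (ht x ⟨hx.1.le, hx.2⟩).2)
        (dw x hx.1 (ht x ⟨hx.1.le, hx.2⟩).1 (ht x ⟨hx.1.le, hx.2⟩).2))
      (fun x hx => En_deriv_nonpos hx.1 hμ hν (ht x ⟨hx.1.le, hx.2⟩).1)
    apply Continuous.continuousOn
    unfold En; fun_prop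
  have all : ∀ ρ ≥ 0, v ρ ^ 2 ≤ 2 ∧ w ρ ^ 2 ≤ 1 := by
    by_contra! hcon
    obtain ⟨τ, hτ, hbad⟩ := hcon
    let Z : Set ℝ := Ici 0 ∩ {t | 4 ≤ max (v t ^ 2) (w t ^ 2)}
    have hZc : IsClosed Z := isClosed_Ici.inter (isClosed_le continuous_const (by fun_prop))
    have hne : Z.Nonempty := by
      by_contra hemp
      have := step τ hτ (fun t ht => by
        have : t ∉ Z := fun h => hemp ⟨t, h⟩
        simp only [Z, mem_inter_iff, mem_Ici, ht.1, true_and, mem_ofPred_eq, not_le, max_lt_iff] at this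
        exact ⟨this.1.le, this.2.le⟩)
      linarith [hbad this.1]
    have hbb : BddBelow Z := ⟨0, fun t ht => ht.1⟩
    have hm := hZc.csInf_mem hne hbb
    have := step (sInf Z) hm.1 (fun t ht => by
      have : t ∉ Z := fun h => absurd (csInf_le hbb h) (not_le.mpr ht.2)
      simp only [Z, mem_inter_iff, mem_Ici, ht.1, true_and, mem_ofPred_eq, not_le, max_lt_iff] at this
      exact ⟨this.1.le, this.2.le⟩)
    have h4 : 4 ≤ max (v (sInf Z) ^ 2) (w (sInf Z) ^ 2) := hm.2
    rcases le_max_iff.mp h4 with h | h <;> linarith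
  exact ⟨cv, cw, v0, w0, fun ρ hρ => dv ρ hρ (by linarith [(all ρ hρ.le).1]) (by linarith [(all ρ hρ.le).2]),
    fun ρ hρ => dw ρ hρ (by linarith [(all ρ hρ.le).1]) (by linarith [(all ρ hρ.le).2]),
    fun ρ hρ => (all ρ hρ).1, fun ρ hρ => (all ρ hρ).2⟩

lemma cross {v w : ℝ → ℝ} (h : Sol 0 0 v w) : ∃ ρ > 0, v ρ < 0 := by
  by_contra! hv
  have cv := h.cv
  have cw := h.cw
  have dv : ∀ ρ > 0, HasDerivAt v (- w ρ) ρ := fun ρ hρ =>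
    (h.dv ρ hρ).congr_deriv (by ring)
  have dW : ∀ ρ > 0, HasDerivAt (fun t => t ^ 2 * w t) (ρ ^ 2 * v ρ ^ 3) ρ := fun ρ hρ =>
    ((hasDerivAt_pow 2 ρ).mul (h.dw ρ hρ)).congr_deriv (by field_simp; push_cast; ring)
  have hW0 : ∀ t ≥ 0, 0 ≤ t ^ 2 * w t := fun t ht => by
    have := le_of_deriv_nonneg (f := fun t => t ^ 2 * w t) ht (by fun_prop) (fun x hx => dW x hx.1)
      (fun x hx => by have := hv x hx.1; positivity)
    simpa using this
  have hWm : ∀ s t, 0 ≤ s → s ≤ t → s ^ 2 * w s ≤ t ^ 2 * w t := fun s t hs ht =>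
    le_of_deriv_nonneg (f := fun t => t ^ 2 * w t) ht (by fun_prop)
      (fun x hx => dW x (hs.trans_lt hx.1))
      (fun x hx => by have := hv x (hs.trans_lt hx.1); positivity)
  have hw : ∀ t > 0, 0 ≤ w t := fun t ht => nonneg_of_mul_nonneg_right (hW0 t ht.le) (by positivity)
  have hA : ∀ t ≥ 0, v t ^ 3 * t ^ 3 / 3 ≤ t ^ 2 * w t := fun t ht => by
    have := le_of_deriv_nonneg (f := fun t => t ^ 2 * w t - v t ^ 3 * t ^ 3 / 3)
      (f' := fun t => v t ^ 2 * w t * t ^ 3) ht (by fun_prop)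
      (fun x hx => ((dW x hx.1).sub ((((dv x hx.1).pow 3).mul (hasDerivAt_pow 3 x)).div_const 3)).congr_deriv
        (by simp only [Pi.pow_apply]; push_cast; ring))
      (fun x hx => by have := hw x hx.1; have := hx.1; positivity)
    simp at this
    linarith
  have hB : ∀ s > 0, s ^ 2 * w s ≤ s * v s := fun s hs => by
    by_contra! hlt
    set c := s ^ 2 * w s with hc
    have hc0 : 0 ≤ c := hW0 s hs.le
    set δ := c / s - v s with hδ
    have hδ0 : 0 < δ := by
      rw [hδ, sub_pos, lt_div_iff₀ hs]; linarith
    set T := s + c / δ with hT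
    have hsT : s ≤ T := by rw [hT]; have : 0 ≤ c / δ := by positivity
                           linarith
    have hT0 : 0 < T := hs.trans_le hsT
    have h1 := le_of_deriv_nonpos (f := fun t => v t - c * t⁻¹)
      (f' := fun t => - w t + c / t ^ 2) hsT
      (cv.continuousOn.sub (continuousOn_const.mul
        (continuousOn_id.inv₀ (fun x hx => (hs.trans_le hx.1).ne'))))
      (fun x hx => ((dv x (hs.trans hx.1)).sub
        ((hasDerivAt_inv (hs.trans hx.1).ne').const_mul c)).congr_deriv (by
          have : x ≠ 0 := (hs.trans hx.1).ne'
          field_simp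
          ring))
      (fun x hx => by
        have hx0 : 0 < x := hs.trans hx.1
        have := hWm s x hs.le hx.1.le
        have : c / x ^ 2 ≤ w x := by rw [div_le_iff₀ (by positivity)]; linarith
        linarith)
    simp only [← div_eq_mul_inv] at h1
    have h2 := hv T hT0
    have h3 : c / T < δ := by
      rw [div_lt_iff₀ hT0, hT, mul_add]
      have : δ * (c / δ) = c := by field_simp
      rw [this]
      have : 0 < δ * s := by positivity
      linarith
    linarith
  have hv12 : 1 / 2 ≤ v (1 / 2) := by
    have := le_of_deriv_nonneg (f := fun t => v t + t) (f' := fun t => - w t + 1)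
      (a := 0) (b := 1 / 2) (by norm_num) (by fun_prop)
      (fun x hx => (dv x hx.1).add (hasDerivAt_id x))
      (fun x hx => by
        have h1 := h.bw x hx.1.le
        have : w x ≤ 1 := by nlinarith
        linarith)
    simp only [h.v0] at this
    linarith
  have hc : 0 < w 1 := by
    have h1 := hA (1/2) (by norm_num)
    have h2 := hWm (1/2) 1 (by norm_num) (by norm_num)
    have h3 : 0 < v (1/2) ^ 3 := by positivity
    linarith
  have hC : ∀ t > 0, (t ^ 2 * w t) ^ 3 ≤ t ^ 3 * v t ^ 3 := fun t ht => by
    rw [← mul_pow]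
    exact pow_le_pow_left₀ (hW0 t ht.le) (hB t ht) 3
  have hD : ∀ t ≥ 1, w 1 + w 1 ^ 3 * Real.log t ≤ t ^ 2 * w t := fun t ht => by
    have := le_of_deriv_nonneg (f := fun t => t ^ 2 * w t - w 1 ^ 3 * Real.log t)
      (f' := fun t => t ^ 2 * v t ^ 3 - w 1 ^ 3 * t⁻¹) ht
      (((by fun_prop : Continuous fun t => t ^ 2 * w t).continuousOn).sub (continuousOn_const.mul
        (Real.continuousOn_log.mono (fun x hx => by
          have : (0:ℝ) < x := by linarith [hx.1]
          simpa using this.ne'))))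
      (fun x hx => by
        have hx0 : 0 < x := by linarith [hx.1]
        exact (dW x hx0).sub ((Real.hasDerivAt_log hx0.ne').const_mul _))
      (fun x hx => by
        have hx0 : 0 < x := by linarith [hx.1]
        have h1 := hC x hx0
        have h2 := hWm 1 x (by norm_num) hx.1.le
        have h3 : w 1 ^ 3 ≤ (x ^ 2 * w x) ^ 3 := by
          apply pow_le_pow_left₀ hc.le; linarith
        rw [sub_nonneg, ← div_eq_mul_inv, div_le_iff₀ hx0]
        nlinarith)
    simp at this
    linarith
  have hfin := hD (Real.exp (3 / w 1 ^ 3)) (Real.one_le_exp (by positivity))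
  rw [Real.log_exp] at hfin
  set t := Real.exp (3 / w 1 ^ 3) with ht
  have ht0 : 0 < t := Real.exp_pos _
  have h1 : w 1 ^ 3 * (3 / w 1 ^ 3) = 3 := by field_simp
  rw [h1] at hfin
  have h2 := hA t ht0.le
  have h3 := hC t ht0
  set W := t ^ 2 * w t
  have h4 : W ^ 3 ≤ 3 * W := by linarith
  have h5 : 3 < W := by linarith
  have h6 : 0 < W * (W ^ 2 - 3) := mul_pos (by linarith) (by nlinarith)
  nlinarith

section
variable {μ ν : ℝ} {v w : ℝ → ℝ}

lemma En_anti (hμ : μ ∈ Icc (0:ℝ) (1/8)) (hν : ν ∈ Icc (0:ℝ) 1) (h : Sol μ ν v w)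
    {s t : ℝ} (hs : 0 ≤ s) (hst : s ≤ t) : En μ ν (v t) (w t) ≤ En μ ν (v s) (w s) := by
  have cv := h.cv
  have cw := h.cw
  refine le_of_deriv_nonpos (f := fun r => En μ ν (v r) (w r)) hst
    (by apply Continuous.continuousOn; unfold En; fun_prop)
    (fun x hx => En_deriv (hs.trans_lt hx.1) (h.dv x (hs.trans_lt hx.1)) (h.dw x (hs.trans_lt hx.1)))
    (fun x hx => En_deriv_nonpos (hs.trans_lt hx.1) hμ hν
      (by linarith [h.bv x (hs.trans_lt hx.1).le]))

lemma S_bounds (hμ : μ ∈ Icc (0:ℝ) (1/8)) {x y : ℝ} (hx : x ^ 2 ≤ 2) (hy : y ^ 2 ≤ 1) :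
    -1 ≤ x ^ 2 - μ * y ^ 2 ∧ x ^ 2 - μ * y ^ 2 ≤ 2 := by
  have h1 : 0 ≤ μ * y ^ 2 := mul_nonneg hμ.1 (sq_nonneg _)
  have h2 : μ * y ^ 2 ≤ 1 / 8 * 1 := mul_le_mul hμ.2 hy (sq_nonneg _) (by norm_num)
  constructor <;> nlinarith [sq_nonneg x]

lemma b_bounds (hμ : μ ∈ Icc (0:ℝ) (1/8)) (hν : ν ∈ Icc (0:ℝ) 1) {x y : ℝ}
    (hx : x ^ 2 ≤ 2) (hy : y ^ 2 ≤ 1) :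
    3 / 8 ≤ (1 - μ * ν) - μ * (x ^ 2 - μ * y ^ 2) ∧
      (1 - μ * ν) - μ * (x ^ 2 - μ * y ^ 2) ≤ 2 := by
  obtain ⟨h1, h2⟩ := S_bounds hμ hx hy
  have h3 : 0 ≤ μ * ν := mul_nonneg hμ.1 hν.1
  have h4 : μ * ν ≤ 1 / 8 * 1 := mul_le_mul hμ.2 hν.2 hν.1 (by norm_num)
  have := hμ.1
  have := hμ.2
  constructor <;> nlinarith

lemma nonvanish (hμ : μ ∈ Icc (0:ℝ) (1/8)) (hν : ν ∈ Icc (0:ℝ) 1) (h : Sol μ ν v w)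
    {ρ : ℝ} (hρ : 0 ≤ ρ) : 0 < v ρ ^ 2 + w ρ ^ 2 := by
  have cv := h.cv
  have cw := h.cw
  rcases hρ.eq_or_lt with rfl | hρ
  · rw [h.v0, h.w0]; norm_num
  have hev : ∀ᶠ t in 𝓝[>] (0:ℝ), 0 < v t := by
    apply nhdsWithin_le_nhds
    exact cv.continuousAt.eventually_mem (lt_mem_nhds (by rw [h.v0]; norm_num))
  obtain ⟨δ, hvδ, hδ⟩ := (hev.and (Ioo_mem_nhdsGT hρ)).exists
  have key := le_of_deriv_nonneg (f := fun t => t ^ 4 * Real.exp (5 * t) * (v t ^ 2 + w t ^ 2))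
    (f' := fun t => t ^ 3 * Real.exp (5 * t) * (4 * v t ^ 2 + t * (5 * (v t ^ 2 + w t ^ 2)
      + 2 * (v t * w t) * ((μ * (v t ^ 2 - μ * w t ^ 2) - (1 - μ * ν)) + (v t ^ 2 - μ * w t ^ 2 - ν)))))
    hδ.2.le (by fun_prop)
    (fun x hx => by
      have hx0 : 0 < x := hδ.1.trans hx.1
      have he : HasDerivAt (fun t => Real.exp (5 * t)) (Real.exp (5 * x) * 5) x := by
        simpa using ((hasDerivAt_id x).const_mul 5).exp
      refine (((hasDerivAt_pow 4 x).mul he).mul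
        (((h.dv x hx0).pow 2).add ((h.dw x hx0).pow 2))).congr_deriv ?_
      simp only [Pi.mul_apply, Pi.add_apply, Pi.pow_apply]
      field_simp
      push_cast
      ring)
    (fun x hx => by
      have hx0 : 0 < x := hδ.1.trans hx.1
      have e1 := S_bounds hμ (h.bv x hx0.le) (h.bw x hx0.le)
      have e2 := b_bounds hμ hν (h.bv x hx0.le) (h.bw x hx0.le)
      have := hν.1
      have := hν.2
      set Q := (μ * (v x ^ 2 - μ * w x ^ 2) - (1 - μ * ν)) + (v x ^ 2 - μ * w x ^ 2 - ν) with hQ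
      have q1 : -5 ≤ Q := by linarith
      have q2 : Q ≤ 5 := by linarith
      have : 0 ≤ 5 * (v x ^ 2 + w x ^ 2) + 2 * (v x * w x) * Q := by
        nlinarith [mul_nonneg (sq_nonneg (v x + w x)) (by linarith : 0 ≤ 5 + Q),
          mul_nonneg (sq_nonneg (v x - w x)) (by linarith : 0 ≤ 5 - Q)]
      positivity)
  have h0 : 0 < δ ^ 4 * Real.exp (5 * δ) * (v δ ^ 2 + w δ ^ 2) := by
    have := hδ.1
    positivity
  exact pos_of_mul_pos_right (h0.trans_le key) (by positivity)

lemma stay_pos (hμ : μ ∈ Icc (0:ℝ) (1/8)) (hν : ν ∈ Icc (0:ℝ) 1) (h : Sol μ ν v w)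
    {ρ : ℝ} (hρ : 0 ≤ ρ) (hpos : ∀ t ∈ Icc 0 ρ, 0 < v t) (hE : En μ ν (v ρ) (w ρ) < 0)
    {t : ℝ} (ht : 0 ≤ t) : 0 < v t := by
  rcases le_total t ρ with h1 | h1
  · exact hpos t ⟨ht, h1⟩
  by_contra! hneg
  obtain ⟨z, hz, hz0⟩ := intermediate_value_Icc' h1 h.cv.continuousOn
    ⟨hneg, (hpos ρ (right_mem_Icc.2 hρ)).le⟩
  have h2 := En_anti hμ hν h hρ hz.1
  rw [hz0] at h2
  have h3 : 0 ≤ En μ ν 0 (w z) := by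
    have a1 := hμ.1
    have a2 := hν.1
    have : μ * ν ≤ 1 / 8 * 1 := mul_le_mul hμ.2 hν.2 hν.1 (by norm_num)
    have e : En μ ν 0 (w z) = μ ^ 2 * (w z) ^ 4 / 4 + ν * μ * (w z) ^ 2 / 2
      + (1 / 2 - μ * ν) * (w z) ^ 2 := by unfold En; ring
    rw [e]
    have : 0 ≤ (1 / 2 - μ * ν) * (w z) ^ 2 := mul_nonneg (by linarith) (sq_nonneg _)
    positivity
  linarith

end

lemma decay {μ ν : ℝ} {v w : ℝ → ℝ} (hμ : μ ∈ Icc (0:ℝ) (1/8)) (hν : ν ∈ Icc (0:ℝ) 1)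
    (hν0 : 0 < ν) (h : Sol μ ν v w)
    (hP : ∀ ρ ≥ 0, 0 ≤ v ρ) (hQ : ∀ ρ ≥ 0, (∀ t ∈ Icc 0 ρ, 0 < v t) → 0 ≤ En μ ν (v ρ) (w ρ)) :
    ∃ C > 0, ∃ σ > 0, ∀ ρ ≥ 0, |v ρ| + |w ρ| ≤ C * Real.exp (-σ * ρ) := by
  have cv := h.cv
  have cw := h.cw
  -- bounds
  have bv : ∀ ρ ≥ 0, |v ρ| ≤ 2 := fun ρ hρ =>
    abs_le_of_sq_le_sq (by linarith [h.bv ρ hρ]) (by norm_num)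
  have bw : ∀ ρ ≥ 0, |w ρ| ≤ 1 := fun ρ hρ =>
    abs_le_of_sq_le_sq (by linarith [h.bw ρ hρ]) (by norm_num)
  -- step 1
  have hv : ∀ ρ ≥ 0, 0 < v ρ := by
    intro ρ hρ
    refine lt_of_le_of_ne (hP ρ hρ) fun h0 => ?_
    have hρ0 : 0 < ρ := by
      rcases hρ.eq_or_lt with e | e
      · rw [← e, h.v0] at h0; norm_num at h0
      · exact e
    have hmin : IsLocalMin v ρ := by
      filter_upwards [lt_mem_nhds hρ0] with t ht
      rw [← h0]; exact hP t ht.le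
    have hd := hmin.hasDerivAt_eq_zero (h.dv ρ hρ0)
    have hb := (b_bounds hμ hν (h.bv ρ hρ) (h.bw ρ hρ)).1
    have hw0 : w ρ = 0 := by
      rcases mul_eq_zero.mp hd with e | e
      · linarith
      · exact e
    have := nonvanish hμ hν h hρ
    rw [← h0, hw0] at this
    norm_num at this
  -- step 2
  have hE : ∀ ρ ≥ 0, 0 ≤ En μ ν (v ρ) (w ρ) := fun ρ hρ => hQ ρ hρ (fun t ht => hv t ht.1)
  have hν2 : ν ≤ 1 / 2 := by
    have := hE 0 le_rfl
    rw [h.v0, h.w0] at this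
    unfold En at this
    linarith
  -- step 3
  have dW : ∀ ρ > 0, HasDerivAt (fun t => t ^ 2 * w t)
      (ρ ^ 2 * ((v ρ ^ 2 - μ * w ρ ^ 2 - ν) * v ρ)) ρ := fun ρ hρ =>
    ((hasDerivAt_pow 2 ρ).mul (h.dw ρ hρ)).congr_deriv (by field_simp; push_cast; ring)
  have hw : ∀ ρ > 0, 0 < w ρ := by
    have hev : ∀ᶠ t in 𝓝 (0:ℝ), 0 < v t ^ 2 - μ * w t ^ 2 - ν := by
      have hc : Continuous fun t => v t ^ 2 - μ * w t ^ 2 - ν := by fun_prop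
      exact hc.continuousAt.eventually_mem (lt_mem_nhds (by rw [h.v0, h.w0]; linarith))
    obtain ⟨δ, hδ, hδ'⟩ := Metric.eventually_nhds_iff.mp hev
    have hnear : ∀ t, 0 < t → t < δ → 0 < w t := by
      intro t ht htδ
      obtain ⟨c, hc, hce⟩ := exists_hasDerivAt_eq_slope (fun t => t ^ 2 * w t) _ ht
        (by fun_prop) (fun x hx => dW x hx.1)
      have h1 : 0 < v c ^ 2 - μ * w c ^ 2 - ν := hδ' (by
        rw [Real.dist_eq, sub_zero, abs_of_pos hc.1]; exact hc.2.trans htδ)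
      have h2 := hv c hc.1.le
      have h3 := hc.1
      have h4 : 0 < c ^ 2 * ((v c ^ 2 - μ * w c ^ 2 - ν) * v c) := by positivity
      rw [hce] at h4
      simp only [sub_zero, ne_eq, OfNat.ofNat_ne_zero, not_false_eq_true, zero_pow, zero_mul] at h4
      have h5 : 0 < t ^ 2 * w t := by
        rcases (div_pos_iff.mp h4) with h | h
        · exact h.1
        · linarith
      exact pos_of_mul_pos_right h5 (by positivity)
    intro τ hτ
    by_contra! hneg
    have hdτ : δ / 2 ≤ τ := by
      by_contra! hlt
      linarith [hnear τ hτ (by linarith)]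
    let Z : Set ℝ := Icc (δ / 2) τ ∩ {t | w t ≤ 0}
    have hZc : IsClosed Z := isClosed_Icc.inter (isClosed_le cw continuous_const)
    have hne : Z.Nonempty := ⟨τ, ⟨hdτ, le_rfl⟩, hneg⟩
    have hbb : BddBelow Z := ⟨δ / 2, fun t ht => ht.1.1⟩
    have hm := hZc.csInf_mem hne hbb
    set z := sInf Z with hz
    have hwz : w z ≤ 0 := hm.2
    have hz0 : 0 < z := by linarith [hm.1.1]
    have hzd : δ / 2 < z := by
      refine lt_of_le_of_ne hm.1.1 fun e => ?_
      rw [← e] at hwz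
      linarith [hnear (δ / 2) (by linarith) (by linarith)]
    have hleft : ∀ᶠ t in 𝓝[<] z, 0 < w t := by
      filter_upwards [Ioo_mem_nhdsLT hzd] with t ht
      by_contra! hle
      have : t ∈ Z := ⟨⟨ht.1.le, ht.2.le.trans hm.1.2⟩, hle⟩
      linarith [csInf_le hbb this, ht.2]
    have hwz' : 0 ≤ w z := ge_of_tendsto (cw.continuousAt.tendsto.mono_left nhdsWithin_le_nhds)
      (hleft.mono fun t ht => ht.le)
    have hwz0 : w z = 0 := le_antisymm hwz hwz'
    have hd := h.dw z hz0
    have hEz := hE z hz0.le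
    have hvz := hv z hz0.le
    rw [hwz0] at hd hEz
    have hv2 : 2 * ν ≤ v z ^ 2 := by
      unfold En at hEz
      have : 0 ≤ v z ^ 2 * (v z ^ 2 - 2 * ν) := by nlinarith
      have := nonneg_of_mul_nonneg_right this (by positivity)
      linarith
    have hdpos : 0 < -(2 / z) * 0 + (v z ^ 2 - μ * 0 ^ 2 - ν) * v z := by
      have : 0 < (v z ^ 2 - ν) * v z := mul_pos (by linarith) hvz
      nlinarith
    have hs := (hasDerivAt_iff_tendsto_slope.mp hd).eventually_mem (lt_mem_nhds hdpos)
    have hs' : ∀ᶠ t in 𝓝[<] z, 0 < slope w z t :=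
      (nhdsWithin_mono z (fun t ht => ne_of_lt ht)) hs
    obtain ⟨t, ⟨ht1, ht2⟩, ht3⟩ := ((hs'.and hleft).and self_mem_nhdsWithin).exists
    rw [slope_def_field, hwz0, sub_zero] at ht1
    have ht3' : t < z := ht3
    have := div_neg_of_pos_of_neg ht2 (by linarith : t - z < 0)
    linarith
  -- step 4
  have hdv : ∀ ρ > 0, (μ * (v ρ ^ 2 - μ * w ρ ^ 2) - (1 - μ * ν)) * w ρ ≤ - (3 / 8) * w ρ := by
    intro ρ hρ
    have hb := (b_bounds hμ hν (h.bv ρ hρ.le) (h.bw ρ hρ.le)).1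
    exact mul_le_mul_of_nonneg_right (by linarith) (hw ρ hρ).le
  have hanti : ∀ s t, 0 ≤ s → s ≤ t → v t ≤ v s := fun s t hs hst =>
    le_of_deriv_nonpos hst cv.continuousOn (fun x hx => h.dv x (hs.trans_lt hx.1))
      (fun x hx => by linarith [hdv x (hs.trans_lt hx.1), hw x (hs.trans_lt hx.1)])
  obtain ⟨l, hl⟩ : ∃ l, Tendsto v atTop (𝓝 l) := by
    have ha : Antitone fun t => v (max t 0) := fun s t hst =>
      hanti _ _ (le_max_right _ _) (max_le_max hst le_rfl)
    have hb : BddBelow (range fun t => v (max t 0)) :=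
      ⟨0, by rintro _ ⟨t, rfl⟩; exact (hv _ (le_max_right _ _)).le⟩
    refine ⟨_, (tendsto_atTop_ciInf ha hb).congr' ?_⟩
    filter_upwards [eventually_ge_atTop 0] with t ht
    rw [max_eq_left ht]
  have hl0 : 0 ≤ l := ge_of_tendsto hl (by
    filter_upwards [eventually_ge_atTop 0] with t ht using (hv t ht).le)
  have hwd : ∀ ρ ≥ 1, -8 ≤ -(2 / ρ) * w ρ + (v ρ ^ 2 - μ * w ρ ^ 2 - ν) * v ρ := by
    intro ρ hρ
    have hρ0 : 0 < ρ := by linarith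
    have e1 := S_bounds hμ (h.bv ρ hρ0.le) (h.bw ρ hρ0.le)
    have e2 := bv ρ hρ0.le
    have e3 := bw ρ hρ0.le
    have e4 := hw ρ hρ0
    have e5 := hv ρ hρ0.le
    rw [abs_of_pos e4] at e3
    rw [abs_of_pos e5] at e2
    have e6 : 2 / ρ ≤ 2 := by rw [div_le_iff₀ hρ0]; linarith
    have e7 : 0 < 2 / ρ := by positivity
    nlinarith
  have hwlim : Tendsto w atTop (𝓝 0) := by
    rw [tendsto_order]
    refine ⟨fun a ha => ?_, fun η hη => ?_⟩
    · filter_upwards [eventually_gt_atTop 0] with t ht using ha.trans (hw t ht)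
    · set k := η / 16 with hk
      have hk0 : 0 < k := by positivity
      have ht1 : Tendsto (fun t => v t - v (t + k)) atTop (𝓝 (l - l)) :=
        hl.sub (hl.comp (tendsto_atTop_add_const_right _ k tendsto_id))
      rw [sub_self] at ht1
      have hev := (tendsto_order.mp ht1).2 (3 / 8 * k * (η / 2)) (by positivity)
      filter_upwards [hev, eventually_ge_atTop 1] with ρ hρ hρ1
      have hρ0 : 0 < ρ := by linarith
      have hlow : ∀ x ∈ Icc ρ (ρ + k), w ρ - 8 * k ≤ w x := by
        intro x hx
        have := le_of_deriv_nonneg (f := fun t => w t + 8 * t) hx.1 (by fun_prop)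
          (fun y hy => (h.dw y (by linarith [hy.1])).add ((hasDerivAt_id y).const_mul 8))
          (fun y hy => by linarith [hwd y (by linarith [hy.1])])
        linarith [hx.2]
      have := le_of_deriv_nonpos (f := fun t => v t + 3 / 8 * (w ρ - 8 * k) * t)
        (a := ρ) (b := ρ + k) (by linarith) (by fun_prop)
        (fun y hy => (h.dv y (by linarith [hy.1])).add
          ((hasDerivAt_id y).const_mul (3 / 8 * (w ρ - 8 * k))))
        (fun y hy => by
          have := hdv y (by linarith [hy.1])
          have := hlow y ⟨hy.1.le, hy.2.le⟩
          linarith)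
      have h1 : k * (3 / 8 * (w ρ - 8 * k)) < k * (3 / 8 * (η / 2)) := by linarith
      have h2 := lt_of_mul_lt_mul_left h1 hk0.le
      linarith
  have hElim : 0 ≤ En μ ν l 0 := by
    have hc : Continuous fun p : ℝ × ℝ => En μ ν p.1 p.2 := by unfold En; fun_prop
    have := (hc.tendsto (l, 0)).comp (hl.prodMk_nhds hwlim)
    refine ge_of_tendsto this ?_
    filter_upwards [eventually_ge_atTop 0] with t ht using hE t ht
  have hl00 : l = 0 := by
    by_contra hne
    have hlp : 0 < l := lt_of_le_of_ne hl0 (Ne.symm hne)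
    have hl2 : 2 * ν ≤ l ^ 2 := by
      unfold En at hElim
      have : 0 ≤ l ^ 2 * (l ^ 2 - 2 * ν) := by nlinarith
      have := nonneg_of_mul_nonneg_right this (by positivity)
      linarith
    have hcp : 0 < (l ^ 2 - ν) * l := mul_pos (by linarith) hlp
    set c := (l ^ 2 - ν) * l with hc
    have hinv : Tendsto (fun ρ : ℝ => 2 / ρ) atTop (𝓝 0) := tendsto_const_nhds.div_atTop tendsto_id
    have hlim : Tendsto (fun ρ => -(2 / ρ) * w ρ + (v ρ ^ 2 - μ * w ρ ^ 2 - ν) * v ρ) atTop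
        (𝓝 (-0 * 0 + (l ^ 2 - μ * 0 ^ 2 - ν) * l)) :=
      (hinv.neg.mul hwlim).add
        ((((hl.pow 2).sub ((hwlim.pow 2).const_mul μ)).sub tendsto_const_nhds).mul hl)
    have e : -0 * 0 + (l ^ 2 - μ * 0 ^ 2 - ν) * l = c := by rw [hc]; ring
    rw [e] at hlim
    have hev := (tendsto_order.mp hlim).1 (c / 2) (by linarith)
    obtain ⟨R, hR⟩ := eventually_atTop.mp (hev.and (eventually_gt_atTop 0))
    have hR0 := (hR R le_rfl).2
    have := le_of_deriv_nonneg (f := fun t => w t - c / 2 * t) (a := R) (b := R + 4 / c)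
      (by have : 0 < 4 / c := by positivity
          linarith) (by fun_prop)
      (fun y hy => (h.dw y (hR y hy.1.le).2).sub ((hasDerivAt_id y).const_mul (c / 2)))
      (fun y hy => by linarith [(hR y hy.1.le).1])
    have e1 : c / 2 * (R + 4 / c) = c / 2 * R + 2 := by field_simp; ring
    rw [e1] at this
    have hp : 0 < 4 / c := by positivity
    have e2 := (abs_le.mp (bw (R + 4 / c) (by linarith))).2
    linarith [hw R hR0]
  rw [hl00] at hl
  -- step 5
  have hsum : Tendsto (fun t => v t ^ 2 + w t ^ 2) atTop (𝓝 (0 ^ 2 + 0 ^ 2)) :=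
    (hl.pow 2).add (hwlim.pow 2)
  have hev := (tendsto_order.mp hsum).2 ν (by simpa using hν0)
  obtain ⟨R, hR⟩ := eventually_atTop.mp (hev.and (eventually_gt_atTop 0))
  have hR0 : 0 < R := (hR R le_rfl).2
  have hwanti : ∀ s t, R ≤ s → s ≤ t → w t ≤ w s := fun s t hs hst =>
    le_of_deriv_nonpos hst cw.continuousOn (fun x hx => h.dw x (hR x (hs.trans hx.1.le)).2)
      (fun x hx => by
        obtain ⟨h1, h2⟩ := hR x (hs.trans hx.1.le)
        have h3 := hw x h2
        have h4 := hv x h2.le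
        have h5 : 0 ≤ μ * w x ^ 2 := mul_nonneg hμ.1 (sq_nonneg _)
        have h6 : 0 ≤ 2 / x * w x := by positivity
        have h7 : (v x ^ 2 - μ * w x ^ 2 - ν) * v x ≤ 0 :=
          mul_nonpos_of_nonpos_of_nonneg (by nlinarith [sq_nonneg (w x)]) h4.le
        linarith)
  have hcmp : ∀ t ≥ R, ν / 2 * v t ≤ w t := by
    intro t ht
    obtain ⟨h1, h2⟩ := hR t ht
    have h3 := hw t h2
    have h4 := hv t h2.le
    have h5 := hE t h2.le
    unfold En at h5
    have h6 : 0 ≤ μ * w t ^ 2 := mul_nonneg hμ.1 (sq_nonneg _)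
    have h7 : μ * w t ^ 2 ≤ w t ^ 2 := by nlinarith [hμ.2, sq_nonneg (w t)]
    have h8 : (v t ^ 2 - μ * w t ^ 2) ^ 2 ≤ (v t ^ 2 + w t ^ 2) ^ 2 := by
      apply sq_le_sq'
      · nlinarith [sq_nonneg (v t)]
      · nlinarith [sq_nonneg (v t)]
    have h9 : (v t ^ 2 + w t ^ 2) ^ 2 ≤ ν * (v t ^ 2 + w t ^ 2) := by
      rw [sq]; exact mul_le_mul_of_nonneg_right h1.le (by positivity)
    have h10 : 0 ≤ ν * (μ * w t ^ 2) := mul_nonneg hν0.le h6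
    have h11 : ν * w t ^ 2 ≤ w t ^ 2 := mul_le_of_le_one_left (sq_nonneg _) hν.2
    have h12 : ν * v t ^ 2 ≤ 3 * w t ^ 2 := by nlinarith
    have h13 : (ν / 2 * v t) ^ 2 ≤ w t ^ 2 := by
      have : ν * (ν * v t ^ 2) ≤ ν * v t ^ 2 := mul_le_of_le_one_left (by positivity) hν.2
      nlinarith
    exact (abs_le.mp (abs_le_of_sq_le_sq h13 h3.le)).2
  set σ := 3 * ν / 16 with hσ
  have hσ0 : 0 < σ := by positivity
  have hvexp : ∀ t ≥ R, v t ≤ 2 * Real.exp (σ * R) * Real.exp (-σ * t) := by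
    intro t ht
    have := le_of_deriv_nonpos (f := fun t => v t * Real.exp (σ * t)) ht (by fun_prop)
      (fun x hx => (h.dv x (hR0.trans hx.1)).mul
        (by simpa using ((hasDerivAt_id x).const_mul σ).exp :
          HasDerivAt (fun t => Real.exp (σ * t)) (Real.exp (σ * x) * σ) x))
      (fun x hx => by
        have h1 := hdv x (hR0.trans hx.1)
        have h2 := hcmp x hx.1.le
        have h3 : (μ * (v x ^ 2 - μ * w x ^ 2) - (1 - μ * ν)) * w x + v x * σ ≤ 0 := by
          rw [hσ]; linarith
        have h4 := Real.exp_pos (σ * x)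
        nlinarith)
    have h2 : v R * Real.exp (σ * R) ≤ 2 * Real.exp (σ * R) := by
      gcongr
      exact (abs_le.mp (bv R hR0.le)).2
    have h3 : Real.exp (σ * t) * Real.exp (-σ * t) = 1 := by rw [← Real.exp_add]; simp
    calc v t = v t * Real.exp (σ * t) * Real.exp (-σ * t) := by rw [mul_assoc, h3, mul_one]
      _ ≤ _ := mul_le_mul_of_nonneg_right (this.trans h2) (Real.exp_pos _).le
  have hwv : ∀ t ≥ R, w (t + 1) ≤ 8 / 3 * v t := by
    intro t ht
    have := le_of_deriv_nonpos (f := fun x => v x + 3 / 8 * w (t + 1) * x)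
      (a := t) (b := t + 1) (by linarith) (by fun_prop)
      (fun y hy => (h.dv y (by linarith [hy.1])).add
        ((hasDerivAt_id y).const_mul (3 / 8 * w (t + 1))))
      (fun y hy => by
        have := hdv y (by linarith [hy.1])
        have := hwanti y (t + 1) (by linarith [hy.1]) hy.2.le
        linarith)
    linarith [hv (t + 1) (by linarith)]
  refine ⟨8 * Real.exp (σ * (R + 1)), by positivity, σ, hσ0, fun ρ hρ => ?_⟩
  rw [mul_assoc, ← Real.exp_add]
  rcases le_total ρ (R + 1) with hle | hge
  · have h1 : 1 ≤ Real.exp (σ * (R + 1) + -σ * ρ) := by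
      apply Real.one_le_exp
      nlinarith
    linarith [bv ρ hρ, bw ρ hρ]
  · have h1 := hvexp ρ (by linarith)
    have h2 := hwv (ρ - 1) (by linarith)
    have h3 := hvexp (ρ - 1) (by linarith)
    rw [sub_add_cancel] at h2
    rw [mul_assoc, ← Real.exp_add] at h1 h3
    have e1 : σ * R + -σ * (ρ - 1) = σ * (R + 1) + -σ * ρ := by ring
    rw [e1] at h3
    have e2 : Real.exp (σ * R + -σ * ρ) ≤ Real.exp (σ * (R + 1) + -σ * ρ) := by
      apply Real.exp_le_exp.mpr; linarith
    rw [abs_of_pos (hv ρ hρ), abs_of_pos (hw ρ (by linarith))]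
    linarith [Real.exp_pos (σ * (R + 1) + -σ * ρ)]

lemma shoot : ∃ ε₀ > (0:ℝ), ∀ ε ∈ Ioo (0:ℝ) ε₀, ∃ μ ν : ℝ, ∃ v w : ℝ → ℝ,
    0 < μ ∧ μ ∈ Icc (0:ℝ) (1/8) ∧ ν ∈ Icc (0:ℝ) 1 ∧ μ * ν = ε ∧ Sol μ ν v w ∧
    ∃ C > 0, ∃ σ > 0, ∀ ρ ≥ 0, |v ρ| + |w ρ| ≤ C * Real.exp (-σ * ρ) := by
  obtain ⟨v, w, l, hS, hcv, hv, hw⟩ := family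
  have cvp : ∀ ρ, Continuous fun p => v p ρ := fun ρ => by
    refine (LipschitzWith.of_dist_le_mul (K := ⟨Real.exp (l * |ρ|), (Real.exp_pos _).le⟩)
      fun p q => ?_).continuous
    rw [Real.dist_eq, dist_eq_norm]; exact hv p q ρ
  have cwp : ∀ ρ, Continuous fun p => w p ρ := fun ρ => by
    refine (LipschitzWith.of_dist_le_mul (K := ⟨Real.exp (l * |ρ|), (Real.exp_pos _).le⟩)
      fun p q => ?_).continuous
    rw [Real.dist_eq, dist_eq_norm]; exact hw p q ρ
  let P : Set (ℝ × ℝ) := {p | ∃ ρ ≥ 0, v p ρ < 0}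
  let Q : Set (ℝ × ℝ) := {p | ∃ ρ ≥ 0, (∀ t ∈ Icc 0 ρ, 0 < v p t) ∧ En p.1 p.2 (v p ρ) (w p ρ) < 0}
  have hPo : IsOpen P := by
    rw [isOpen_iff_mem_nhds]
    rintro p ⟨ρ, hρ, hneg⟩
    filter_upwards [(cvp ρ).continuousAt.eventually_mem (gt_mem_nhds hneg)] with q hq
    exact ⟨ρ, hρ, hq⟩
  have hQo : IsOpen Q := by
    rw [isOpen_iff_mem_nhds]
    rintro p ⟨ρ, hρ, hpos, hneg⟩
    have cE : Continuous fun p : ℝ × ℝ => En p.1 p.2 (v p ρ) (w p ρ) := by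
      have := cvp ρ
      have := cwp ρ
      unfold En; fun_prop
    obtain ⟨t0, ht0, hmin⟩ := isCompact_Icc.exists_isMinOn (nonempty_Icc.2 hρ)
      (hcv p).continuousOn
    have hm := hpos t0 ht0
    have hball : ∀ᶠ q in 𝓝 p, Real.exp (|l| * ρ) * ‖p - q‖ < v p t0 := by
      have hc : Continuous fun q : ℝ × ℝ => Real.exp (|l| * ρ) * ‖p - q‖ := by fun_prop
      exact hc.continuousAt.eventually_mem (gt_mem_nhds (by simpa using hm))
    filter_upwards [cE.continuousAt.eventually_mem (gt_mem_nhds hneg), hball] with q hq1 hq2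
    refine ⟨ρ, hρ, fun t ht => ?_, hq1⟩
    have h1 := hv p q t
    have h2 : v p t0 ≤ v p t := hmin ht
    have h3 : Real.exp (l * |t|) ≤ Real.exp (|l| * ρ) := by
      apply Real.exp_le_exp.mpr
      rw [abs_of_nonneg ht.1]
      exact mul_le_mul (le_abs_self l) ht.2 ht.1 (abs_nonneg l)
    have h4 : Real.exp (l * |t|) * ‖p - q‖ ≤ Real.exp (|l| * ρ) * ‖p - q‖ := by gcongr
    have h5 := (abs_le.mp h1).2
    linarith
  have h0P : ((0:ℝ), (0:ℝ)) ∈ P := by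
    obtain ⟨ρ, hρ, hneg⟩ := cross (hS 0 ⟨le_rfl, by norm_num⟩ 0 ⟨le_rfl, by norm_num⟩)
    exact ⟨ρ, hρ.le, hneg⟩
  obtain ⟨r, hr, hball⟩ := Metric.isOpen_iff.mp hPo _ h0P
  refine ⟨min (1/64) (r ^ 2), by positivity, fun ε hε => ?_⟩
  have hε0 := hε.1
  have hε1 : ε < 1 / 64 := hε.2.trans_le (min_le_left _ _)
  have hε2 : ε < r ^ 2 := hε.2.trans_le (min_le_right _ _)
  set s := Real.sqrt ε with hs
  have hs0 : 0 < s := Real.sqrt_pos.mpr hε0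
  have hss : s * s = ε := Real.mul_self_sqrt hε0.le
  have hs8 : s ≤ 1 / 8 := by nlinarith
  have hsr : s < r := by nlinarith
  have hεs : ε ≤ s := by nlinarith
  have hbox : ∀ m ∈ Icc ε s, m ∈ Icc (0:ℝ) (1/8) ∧ ε / m ∈ Icc (0:ℝ) 1 := by
    intro m hm
    have hm0 : 0 < m := hε0.trans_le hm.1
    refine ⟨⟨hm0.le, hm.2.trans hs8⟩, by positivity, ?_⟩
    rw [div_le_iff₀ hm0]; linarith [hm.1]
  have hconn : IsPreconnected ((fun m => (m, ε / m)) '' Icc ε s) := by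
    apply isPreconnected_Icc.image
    apply continuousOn_id.prodMk
    exact continuousOn_const.div continuousOn_id (fun m hm => (hε0.trans_le hm.1).ne')
  by_cases hcov : (fun m => (m, ε / m)) '' Icc ε s ⊆ P ∪ Q
  · exfalso
    obtain ⟨p, ⟨m, hm, rfl⟩, ⟨ρ, hρ, hneg⟩, ρ', hρ', hpos, hE⟩ := hconn P Q hPo hQo hcov
      ⟨_, ⟨s, ⟨hεs, le_rfl⟩, rfl⟩, hball (by
        have : ε / s = s := by rw [← hss]; field_simp
        simp only [this, Metric.mem_ball, dist_eq_norm, Prod.norm_def, Prod.fst_sub, Prod.snd_sub,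
          sub_zero, max_self, Real.norm_eq_abs, abs_of_pos hs0]
        exact hsr)⟩
      ⟨_, ⟨ε, ⟨le_rfl, hεs⟩, rfl⟩, 0, le_rfl, by
        have h1 := hS ε (hbox ε ⟨le_rfl, hεs⟩).1 (ε / ε) (hbox ε ⟨le_rfl, hεs⟩).2
        constructor
        · intro t ht
          have : t = 0 := le_antisymm ht.2 ht.1
          rw [this]; simp only [h1.v0]; norm_num
        · simp only [h1.v0, h1.w0]
          rw [div_self hε0.ne']
          unfold En; norm_num⟩
    obtain ⟨b1, b2⟩ := hbox m hm
    have := stay_pos b1 b2 (hS m b1 _ b2) hρ' hpos hE hρ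
    linarith
  · obtain ⟨p, ⟨m, hm, rfl⟩, hnot⟩ := not_subset.mp hcov
    obtain ⟨b1, b2⟩ := hbox m hm
    have hm0 : 0 < m := hε0.trans_le hm.1
    have hn1 : (m, ε / m) ∉ P := fun h => hnot (Or.inl h)
    have hn2 : (m, ε / m) ∉ Q := fun h => hnot (Or.inr h)
    refine ⟨m, ε / m, v (m, ε / m), w (m, ε / m), hm0, b1, b2, by field_simp, hS m b1 _ b2,
      decay b1 b2 (by positivity) (hS m b1 _ b2) (fun ρ hρ => ?_) (fun ρ hρ hpos => ?_)⟩
    · by_contra! hneg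
      exact hn1 ⟨ρ, hρ, hneg⟩
    · by_contra! hneg
      exact hn2 ⟨ρ, hρ, hpos, hneg⟩

lemma smooth {f g : ℝ → ℝ} {ε : ℝ}
    (df : ∀ r > 0, HasDerivAt f (-(2 / r) * f r + ((g r ^ 2 - f r ^ 2) - ε) * g r) r)
    (dg : ∀ r > 0, HasDerivAt g (((g r ^ 2 - f r ^ 2) - (1 - ε)) * f r) r) :
    ContDiffOn ℝ 2 f (Ioi 0) ∧ ContDiffOn ℝ 2 g (Ioi 0) := by
  have step : ∀ n : ℕ, ContDiffOn ℝ n f (Ioi 0) → ContDiffOn ℝ n g (Ioi 0) →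
      ContDiffOn ℝ (n + 1) f (Ioi 0) ∧ ContDiffOn ℝ (n + 1) g (Ioi 0) := by
    intro n hf hg
    have hinv : ContDiffOn ℝ n (fun r : ℝ => 2 / r) (Ioi 0) :=
      contDiffOn_const.div contDiffOn_id (fun r hr => (ne_of_gt hr))
    constructor
    · rw [contDiffOn_succ_iff_deriv_of_isOpen isOpen_Ioi]
      refine ⟨fun r hr => (df r hr).differentiableAt.differentiableWithinAt, by simp, ?_⟩
      refine ContDiffOn.congr (f := fun r => -(2 / r) * f r + ((g r ^ 2 - f r ^ 2) - ε) * g r) ?_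
        (fun r hr => (df r hr).deriv)
      fun_prop
    · rw [contDiffOn_succ_iff_deriv_of_isOpen isOpen_Ioi]
      refine ⟨fun r hr => (dg r hr).differentiableAt.differentiableWithinAt, by simp, ?_⟩
      refine ContDiffOn.congr (f := fun r => ((g r ^ 2 - f r ^ 2) - (1 - ε)) * f r) ?_
        (fun r hr => (dg r hr).deriv)
      fun_prop
  have h0 := step 0
    (contDiffOn_zero.2 fun r hr => (df r hr).continuousAt.continuousWithinAt)
    (contDiffOn_zero.2 fun r hr => (dg r hr).continuousAt.continuousWithinAt)
  have h1 := step 1 (by simpa using h0.1) (by simpa using h0.2)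
  have e : (((1:ℕ) : WithTop ℕ∞) + 1) = 2 := by norm_num
  rwa [e] at h1

end Soler

/-- Theorem 1.3 of the paper: for the Soler model `F(s) = s` with mass `m = 1/2`, there is
`ε₀ > 0` such that for every `ε ∈ (0, ε₀)` and frequency `ω = m − ε`, the radially reduced
nonlinear Dirac system has a nontrivial, twice continuously differentiable, exponentially
decaying solution `(f, g)`. -/
theorem dirac_localized_solutions_soler :
    ∃ ε₀ > (0:ℝ), ∀ ε ∈ Set.Ioo (0:ℝ) ε₀, ∀ ω : ℝ, ω = 1/2 - ε →
      ∃ f g : ℝ → ℝ,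
        ContDiffOn ℝ 2 f (Set.Ioi 0) ∧ ContDiffOn ℝ 2 g (Set.Ioi 0) ∧
        (∃ r > (0:ℝ), f r ≠ 0 ∨ g r ≠ 0) ∧
        (∀ r > (0:ℝ),
          deriv f r + (2 / r) * f r = ((g r ^ 2 - f r ^ 2) - (1/2 - ω)) * g r ∧
          deriv g r = ((g r ^ 2 - f r ^ 2) - (1/2 + ω)) * f r) ∧
        ∃ C > (0:ℝ), ∃ σ > (0:ℝ), ∀ r ≥ (1:ℝ),
          |f r| + |g r| + |deriv f r| + |deriv g r| ≤ C * Real.exp (-σ * r) := by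
  obtain ⟨ε₀, hε₀, H⟩ := Soler.shoot
  refine ⟨ε₀, hε₀, fun ε hε ω hω => ?_⟩
  obtain ⟨μ, ν, v, w, hμ0, hμ, hν, hμν, h, C, hC, σ, hσ, hdec⟩ := H ε hε
  subst hω
  set x := Real.sqrt μ with hx
  have hx0 : 0 < x := Real.sqrt_pos.mpr hμ0
  have hxx : x ^ 2 = μ := Real.sq_sqrt hμ0.le
  have hx1 : x ≤ 1 := by nlinarith [hμ.2]
  have hlin : ∀ r : ℝ, HasDerivAt (fun r => x * r) x r := fun r => by
    simpa using (hasDerivAt_id r).const_mul x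
  have df : ∀ r > 0, HasDerivAt (fun r => x ^ 2 * w (x * r))
      (-(2 / r) * (x ^ 2 * w (x * r)) + (((x * v (x * r)) ^ 2 - (x ^ 2 * w (x * r)) ^ 2) - ε)
        * (x * v (x * r))) r := fun r hr => by
    have h1 := ((h.dw (x * r) (by positivity)).comp r (hlin r)).const_mul (x ^ 2)
    refine h1.congr_deriv ?_
    rw [← hμν, ← hxx]
    field_simp
  have dg : ∀ r > 0, HasDerivAt (fun r => x * v (x * r))
      ((((x * v (x * r)) ^ 2 - (x ^ 2 * w (x * r)) ^ 2) - (1 - ε)) * (x ^ 2 * w (x * r))) r :=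
    fun r hr => by
    have h1 := ((h.dv (x * r) (by positivity)).comp r (hlin r)).const_mul x
    refine h1.congr_deriv ?_
    rw [← hμν, ← hxx]
    ring
  obtain ⟨cf, cg⟩ := Soler.smooth df dg
  refine ⟨fun r => x ^ 2 * w (x * r), fun r => x * v (x * r), cf, cg, ?_, fun r hr => ?_,
    5 * C, by positivity, σ * x, by positivity, fun r hr => ?_⟩
  · refine ⟨1, one_pos, ?_⟩
    by_contra! hcon
    have h1 := Soler.nonvanish hμ hν h (ρ := x * 1) (by positivity)
    have a1 : w (x * 1) = 0 := by
      rcases mul_eq_zero.mp hcon.1 with e | e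
      · exact absurd e (by positivity)
      · exact e
    have a2 : v (x * 1) = 0 := by
      rcases mul_eq_zero.mp hcon.2 with e | e
      · exact absurd e (by positivity)
      · exact e
    rw [a1, a2] at h1
    norm_num at h1
  · rw [(df r hr).deriv, (dg r hr).deriv]
    constructor <;> ring
  · have hr0 : 0 < r := by linarith
    rw [(df r hr0).deriv, (dg r hr0).deriv]
    have hd := hdec (x * r) (by positivity)
    have e0 : -(σ * x) * r = -σ * (x * r) := by ring
    rw [e0]
    have b1 := h.bv (x * r) (by positivity)
    have b2 := h.bw (x * r) (by positivity)
    have s1 := Soler.S_bounds hμ b1 b2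
    have s2 := Soler.b_bounds hμ hν b1 b2
    set V := v (x * r)
    set W := w (x * r)
    have i1 : |x ^ 2 * W| ≤ |W| := by
      rw [abs_mul, abs_of_nonneg (by positivity)]
      exact mul_le_of_le_one_left (abs_nonneg _) (by nlinarith)
    have i2 : |x * V| ≤ |V| := by
      rw [abs_mul, abs_of_nonneg hx0.le]
      exact mul_le_of_le_one_left (abs_nonneg _) hx1
    have eS : (x * V) ^ 2 - (x ^ 2 * W) ^ 2 = μ * (V ^ 2 - μ * W ^ 2) := by
      rw [← hxx]; ring
    have i3 : |((x * V) ^ 2 - (x ^ 2 * W) ^ 2) - (1 - ε)| ≤ 2 := by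
      rw [eS, ← hμν, abs_le]; constructor <;> linarith
    have i4 : |((x * V) ^ 2 - (x ^ 2 * W) ^ 2) - ε| ≤ 2 := by
      have h4 : μ * ν ≤ 1 / 8 * 1 := mul_le_mul hμ.2 hν.2 hν.1 (by norm_num)
      have h5 : 0 ≤ μ * ν := mul_nonneg hμ.1 hν.1
      rw [eS, ← hμν, abs_le]; constructor <;> linarith
    have i5 : |2 / r| ≤ 2 := by
      rw [abs_of_pos (by positivity), div_le_iff₀ hr0]; linarith
    have j1 : |-(2 / r) * (x ^ 2 * W) + (((x * V) ^ 2 - (x ^ 2 * W) ^ 2) - ε) * (x * V)|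
        ≤ 2 * |W| + 2 * |V| := by
      refine (abs_add_le _ _).trans ?_
      rw [abs_mul, abs_mul _ (x * V), abs_neg]
      gcongr
    have j2 : |(((x * V) ^ 2 - (x ^ 2 * W) ^ 2) - (1 - ε)) * (x ^ 2 * W)| ≤ 2 * |W| := by
      rw [abs_mul]
      gcongr
    have := abs_nonneg V
    calc _ ≤ 5 * (|V| + |W|) := by linarith
      _ ≤ 5 * (C * Real.exp (-σ * (x * r))) := by gcongr
      _ = _ := by ring
end
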